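/- Let n ≥ 2 and let Γ ⊆ ℝⁿ be a convex invariant cone, and let f be a concave elliptic Hessian operator on Γ satisfying condition N with constants N₁, N₂ > 0. Let Ω ⊂ ℝⁿ be a bounded domain and let u be a smooth admissible function on Ω, continuous up to the boundary, solving F(D²u) = 1 in Ω with u = 0 on ∂Ω. Assume moreover that u satisfies condition D with constants D₁, D₂ > 0. Then there exist constants α > 0, β > 0 and C > 0, depending only on f, N₁, N₂, D₁, D₂ and diam(Ω), such that sup_Ω ( (−u) + (−u)^α |Du| + (−u)^β |D²u| ) ≤ C. -/

import Mathlib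

open scoped BigOperators

noncomputable section

/-- The positive orthant `Γₙ = (0,∞)ⁿ` in `ℝⁿ`. -/
def PosOrthant (n : ℕ) : Set (Fin n → ℝ) := {lam | ∀ i, 0 < lam i}

/-- A convex invariant cone: an open cone `Γ ⊆ ℝⁿ` with vertex at the origin, `Γ ≠ ℝⁿ`,
which is convex, satisfies `Γ + Γₙ ⊆ Γ`, and is invariant under permutations of coordinates. -/
def IsConvexInvariantCone {n : ℕ} (Γ : Set (Fin n → ℝ)) : Prop :=
  IsOpen Γ ∧ Γ ≠ Set.univ ∧ Convex ℝ Γ ∧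
    (∀ lam ∈ Γ, ∀ t : ℝ, 0 < t → t • lam ∈ Γ) ∧
    (∀ lam ∈ Γ, ∀ tau ∈ PosOrthant n, lam + tau ∈ Γ) ∧
    (∀ lam ∈ Γ, ∀ σ : Equiv.Perm (Fin n), lam ∘ σ ∈ Γ)

/-- The partial derivative `∂f/∂λᵢ(λ)`. -/
def fpd {n : ℕ} (f : (Fin n → ℝ) → ℝ) (i : Fin n) (lam : Fin n → ℝ) : ℝ :=
  fderiv ℝ f lam (Pi.single i 1)

/-- A concave elliptic Hessian operator on a convex invariant cone `Γ`:
a `C²`, permutation-invariant, concave function `f` on `Γ` which is elliptic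
(`∂f/∂λᵢ > 0`), positive, and positively homogeneous of degree one. -/
def IsConcaveEllipticHessianOp {n : ℕ} (Γ : Set (Fin n → ℝ)) (f : (Fin n → ℝ) → ℝ) : Prop :=
  ContDiffOn ℝ 2 f Γ ∧ ConcaveOn ℝ Γ f ∧
    (∀ lam ∈ Γ, ∀ σ : Equiv.Perm (Fin n), f (lam ∘ σ) = f lam) ∧
    (∀ lam ∈ Γ, ∀ i, 0 < fpd f i lam) ∧
    (∀ lam ∈ Γ, 0 < f lam) ∧
    (∀ lam ∈ Γ, ∀ t : ℝ, 0 < t → f (t • lam) = t * f lam)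

/-- Condition N: whenever `λ ∈ Γ` satisfies `f(λ) = 1` and `Σᵢ ∂f/∂λᵢ(λ) ≤ C` for some `C > 0`,
then `∂f/∂λᵢ(λ) ≥ 1/(N₁ C^{N₂})` for every `i`. -/
def ConditionN {n : ℕ} (Γ : Set (Fin n → ℝ)) (f : (Fin n → ℝ) → ℝ) (N₁ N₂ : ℝ) : Prop :=
  ∀ lam ∈ Γ, f lam = 1 → ∀ C : ℝ, 0 < C → (∑ i, fpd f i lam) ≤ C →
    ∀ i, 1 / (N₁ * C ^ N₂) ≤ fpd f i lam

/-- The Hessian matrix `D²u(x)`. -/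
def hessianMatrix {n : ℕ} (u : EuclideanSpace ℝ (Fin n) → ℝ) (x : EuclideanSpace ℝ (Fin n)) :
    Matrix (Fin n) (Fin n) ℝ :=
  fun i j => iteratedFDeriv ℝ 2 u x ![EuclideanSpace.single i 1, EuclideanSpace.single j 1]

/-- The vector of eigenvalues `λ(D²u(x))` of the Hessian of `u` at `x`
(junk value `0` if the Hessian matrix fails to be symmetric). -/
def hessEigen {n : ℕ} (u : EuclideanSpace ℝ (Fin n) → ℝ) (x : EuclideanSpace ℝ (Fin n)) :
    Fin n → ℝ :=
  if h : (hessianMatrix u x).IsHermitian then h.eigenvalues else 0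

/-- Condition D for a solution `u` of `F(D²u) = 1` on a set `Ω`: at every point, if an
eigenvalue `λᵢ` of `D²u` exceeds `D₁` then `∂f/∂λᵢ(λ) ⬝ λᵢ ≤ D₂`. -/
def ConditionD {n : ℕ} (f : (Fin n → ℝ) → ℝ) (u : EuclideanSpace ℝ (Fin n) → ℝ)
    (Ω : Set (EuclideanSpace ℝ (Fin n))) (D₁ D₂ : ℝ) : Prop :=
  ∀ x ∈ Ω, ∀ i, D₁ < hessEigen u x i →
    fpd f i (hessEigen u x) * hessEigen u x i ≤ D₂

/-- The `k`-th elementary symmetric polynomial `σ_k` on `ℝⁿ`. -/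
def esymmF (n k : ℕ) (lam : Fin n → ℝ) : ℝ :=
  ∑ s ∈ (Finset.univ : Finset (Fin n)).powersetCard k, ∏ i ∈ s, lam i

/-- The Gårding cone `Γ_k = {λ : σ_j(λ) > 0, j = 1,…,k}`. -/
def GammaK (n k : ℕ) : Set (Fin n → ℝ) :=
  {lam | ∀ j : ℕ, 1 ≤ j → j ≤ k → 0 < esymmF n j lam}

/-- The cone `Γ̂_p` of vectors all of whose sums of `p` distinct coordinates are positive. -/
def GammaHat (n p : ℕ) : Set (Fin n → ℝ) :=
  {lam | ∀ s : Finset (Fin n), s.card = p → 0 < ∑ i ∈ s, lam i}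

/-- The `p`-Monge–Ampère operator `M_p(λ) = ∏_{i₁<⋯<i_p} (λ_{i₁} + ⋯ + λ_{i_p})`. -/
def pMA (n p : ℕ) (lam : Fin n → ℝ) : ℝ :=
  ∏ s ∈ (Finset.univ : Finset (Fin n)).powersetCard p, ∑ i ∈ s, lam i

/-- Quadratic growth: `u(x) ≥ C⁻¹|x|² − C` for some `C > 0`. -/
def QuadraticGrowth {n : ℕ} (u : EuclideanSpace ℝ (Fin n) → ℝ) : Prop :=
  ∃ C : ℝ, 0 < C ∧ ∀ x, C⁻¹ * ‖x‖ ^ 2 - C ≤ u x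

/-- `u` is a quadratic polynomial: `u(x) = ½ xᵀAx + b·x + c` with `A` symmetric. -/
def IsQuadraticPolynomial {n : ℕ} (u : EuclideanSpace ℝ (Fin n) → ℝ) : Prop :=
  ∃ (A : Matrix (Fin n) (Fin n) ℝ) (b : Fin n → ℝ) (c : ℝ), A.IsSymm ∧
    ∀ x, u x = (1 / 2) * (∑ i, ∑ j, A i j * x i * x j) + (∑ i, b i * x i) + c

section HelperLemmas
open Filter Topology

/-- second order jets at `0` of real functions -/
def J2 (g : ℝ → ℝ) (a b c : ℝ) : Prop :=
  g 0 = a ∧ ∃ g' : ℝ → ℝ, (∀ᶠ t in 𝓝 (0:ℝ), HasDerivAt g (g' t) t) ∧ g' 0 = b ∧ HasDerivAt g' c 0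

theorem J2.congr {g h : ℝ → ℝ} {a b c : ℝ} (H : J2 g a b c) (e : ∀ᶠ t in 𝓝 (0:ℝ), h t = g t) :
    J2 h a b c := by
  obtain ⟨h0, g', hg, h1, h2⟩ := H
  refine ⟨by rw [e.self_of_nhds, h0], g', ?_, h1, h2⟩
  filter_upwards [hg, e.eventually_nhds] with t ht et
  exact ht.congr_of_eventuallyEq et

theorem J2.cast {g : ℝ → ℝ} {a b c a' b' c' : ℝ} (H : J2 g a b c) (h1 : a' = a) (h2 : b' = b)
    (h3 : c' = c) : J2 g a' b' c' := by subst h1 h2 h3; exact H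

theorem J2.const (a : ℝ) : J2 (fun _ => a) a 0 0 :=
  ⟨rfl, fun _ => 0, Eventually.of_forall fun t => hasDerivAt_const t a, rfl, hasDerivAt_const _ _⟩

theorem J2.id : J2 (fun t => t) 0 1 0 :=
  ⟨rfl, fun _ => 1, Eventually.of_forall fun t => hasDerivAt_id t, rfl, hasDerivAt_const _ _⟩

theorem J2.add {g h : ℝ → ℝ} {a b c a' b' c' : ℝ} (H : J2 g a b c) (K : J2 h a' b' c') :
    J2 (fun t => g t + h t) (a + a') (b + b') (c + c') := by
  obtain ⟨h0, g', hg, h1, h2⟩ := H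
  obtain ⟨k0, k', hk, k1, k2⟩ := K
  refine ⟨by simp [h0, k0], fun t => g' t + k' t, ?_, by simp [h1, k1], h2.add k2⟩
  filter_upwards [hg, hk] with t ht kt
  exact ht.add kt

theorem J2.mul {g h : ℝ → ℝ} {a b c a' b' c' : ℝ} (H : J2 g a b c) (K : J2 h a' b' c') :
    J2 (fun t => g t * h t) (a * a') (b * a' + a * b') (c * a' + 2 * b * b' + a * c') := by
  obtain ⟨h0, g', hg, h1, h2⟩ := H
  obtain ⟨k0, k', hk, k1, k2⟩ := K
  refine ⟨by simp [h0, k0], fun t => g' t * h t + g t * k' t, ?_, by simp [h1, k1, h0, k0], ?_⟩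
  · filter_upwards [hg, hk] with t ht kt
    exact ht.mul kt
  · have A := (h2.mul hk.self_of_nhds).add (hg.self_of_nhds.mul k2)
    refine A.congr_deriv ?_
    rw [h0, k0, h1, k1]; ring

theorem J2.const_mul {g : ℝ → ℝ} {a b c : ℝ} (r : ℝ) (H : J2 g a b c) :
    J2 (fun t => r * g t) (r * a) (r * b) (r * c) :=
  ((J2.const r).mul H).cast (by ring) (by ring) (by ring)

theorem J2.sum {ι : Type*} (s : Finset ι) {g : ι → ℝ → ℝ} {a b c : ι → ℝ}
    (H : ∀ i, J2 (g i) (a i) (b i) (c i)) :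
    J2 (fun t => ∑ i ∈ s, g i t) (∑ i ∈ s, a i) (∑ i ∈ s, b i) (∑ i ∈ s, c i) := by
  classical
  induction s using Finset.induction_on with
  | empty => simpa using J2.const 0
  | insert i s hi ih =>
    simp only [Finset.sum_insert hi]
    exact (H i).add ih

theorem J2.log {g : ℝ → ℝ} {a b c : ℝ} (H : J2 g a b c) (ha : 0 < a) :
    J2 (fun t => Real.log (g t)) (Real.log a) (b / a) (c / a - b ^ 2 / a ^ 2) := by
  obtain ⟨h0, g', hg, h1, h2⟩ := H
  have hc : ContinuousAt g 0 := hg.self_of_nhds.continuousAt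
  have hpos : ∀ᶠ t in 𝓝 (0:ℝ), 0 < g t := hc.eventually (lt_mem_nhds (by rw [h0]; exact ha))
  refine ⟨by simp [h0], fun t => g' t / g t, ?_, by simp [h1, h0], ?_⟩
  · filter_upwards [hg, hpos] with t ht pt
    exact ht.log pt.ne'
  · have A := h2.div hg.self_of_nhds hpos.self_of_nhds.ne'
    refine A.congr_deriv ?_
    rw [h0, h1]; field_simp

theorem J2.localMin {g : ℝ → ℝ} {a b c : ℝ} (H : J2 g a b c)
    (hm : ∀ᶠ t in 𝓝 (0:ℝ), a ≤ g t) : b = 0 ∧ 0 ≤ c := by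
  obtain ⟨h0, g', hg, h1, h2⟩ := H
  have hmin : IsLocalMin g 0 := by
    filter_upwards [hm] with t ht; rw [h0]; exact ht
  have hb : b = 0 := by rw [← h1]; exact hmin.hasDerivAt_eq_zero hg.self_of_nhds
  refine ⟨hb, ?_⟩
  by_contra hc
  push Not at hc
  have hd : deriv g =ᶠ[𝓝 0] g' := hg.mono fun t ht => ht.deriv
  have hdd : deriv (deriv g) 0 = c := by rw [hd.deriv_eq]; exact h2.deriv
  have hmax : IsLocalMax g 0 := isLocalMax_of_deriv_deriv_neg (by rw [hdd]; exact hc)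
    (by rw [hd.self_of_nhds, h1, hb]) hg.self_of_nhds.continuousAt
  have hconst : g =ᶠ[𝓝 0] fun _ => g 0 := by
    filter_upwards [hmin, hmax] with t h1 h2
    exact le_antisymm h2 h1
  have : deriv (deriv g) 0 = 0 := by
    rw [hconst.deriv.deriv_eq]; simp
  linarith

theorem J2.localMax {g : ℝ → ℝ} {a b c : ℝ} (H : J2 g a b c)
    (hm : ∀ᶠ t in 𝓝 (0:ℝ), g t ≤ a) : b = 0 ∧ c ≤ 0 := by
  have := (H.const_mul (-1)).localMin (by filter_upwards [hm] with t ht; linarith)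
  constructor <;> linarith [this.1, this.2]

section DD
variable {E : Type*} [NormedAddCommGroup E] [NormedSpace ℝ E]

/-- directional derivative -/
noncomputable def dd (v : E) (g : E → ℝ) : E → ℝ := fun y => fderiv ℝ g y v

/-- second derivative -/
noncomputable def H2 (u : E → ℝ) (y : E) : E →L[ℝ] E →L[ℝ] ℝ := fderiv ℝ (fderiv ℝ u) y

variable {Ω : Set E} {g u : E → ℝ}

theorem dd_smooth (hΩ : IsOpen Ω) (hg : ContDiffOn ℝ (⊤ : ℕ∞) g Ω) (v : E) :
    ContDiffOn ℝ (⊤ : ℕ∞) (dd v g) Ω := by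
  have := hg.fderiv_of_isOpen (m := (⊤ : ℕ∞)) hΩ (by simp)
  exact this.clm_apply contDiffOn_const

theorem dd_congr (hΩ : IsOpen Ω) {h : E → ℝ} (e : Set.EqOn g h Ω) (v : E) :
    Set.EqOn (dd v g) (dd v h) Ω := by
  intro x hx
  have : g =ᶠ[𝓝 x] h := by
    filter_upwards [hΩ.mem_nhds hx] with y hy using e hy
  simp only [dd, this.fderiv_eq]

theorem smooth_fderiv_diff (hΩ : IsOpen Ω) (hg : ContDiffOn ℝ (⊤ : ℕ∞) g Ω) {x : E} (hx : x ∈ Ω) :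
    DifferentiableAt ℝ (fderiv ℝ g) x := by
  have := hg.fderiv_of_isOpen (m := (⊤ : ℕ∞)) hΩ (by simp)
  exact (this.differentiableOn (by simp)).differentiableAt (hΩ.mem_nhds hx)

theorem smooth_diff (hΩ : IsOpen Ω) (hg : ContDiffOn ℝ (⊤ : ℕ∞) g Ω) {x : E} (hx : x ∈ Ω) :
    DifferentiableAt ℝ g x :=
  (hg.differentiableOn (by simp)).differentiableAt (hΩ.mem_nhds hx)

theorem dd_dd (hΩ : IsOpen Ω) (hg : ContDiffOn ℝ (⊤ : ℕ∞) g Ω) {x : E} (hx : x ∈ Ω) (v w : E) :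
    dd v (dd w g) x = H2 g x v w := by
  have h := smooth_fderiv_diff hΩ hg hx
  have : HasFDerivAt (dd w g) ((ContinuousLinearMap.apply ℝ ℝ w).comp (fderiv ℝ (fderiv ℝ g) x)) x :=
    (ContinuousLinearMap.apply ℝ ℝ w).hasFDerivAt.comp x h.hasFDerivAt
  simp only [dd] at this ⊢
  rw [this.fderiv]; rfl

theorem H2_symm (hΩ : IsOpen Ω) (hg : ContDiffOn ℝ (⊤ : ℕ∞) g Ω) {x : E} (hx : x ∈ Ω) (v w : E) :
    H2 g x v w = H2 g x w v := by
  have h : ContDiffAt ℝ (⊤ : ℕ∞) g x := hg.contDiffAt (hΩ.mem_nhds hx)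
  exact (h.isSymmSndFDerivAt (by simp; exact WithTop.coe_le_coe.2 le_top)) v w

theorem dd_comm (hΩ : IsOpen Ω) (hg : ContDiffOn ℝ (⊤ : ℕ∞) g Ω) (v w : E) :
    Set.EqOn (dd v (dd w g)) (dd w (dd v g)) Ω := by
  intro x hx
  rw [dd_dd hΩ hg hx, dd_dd hΩ hg hx, H2_symm hΩ hg hx]

theorem hasDerivAt_line (hΩ : IsOpen Ω) (hg : ContDiffOn ℝ (⊤ : ℕ∞) g Ω) (x v : E) (t : ℝ)
    (ht : x + t • v ∈ Ω) : HasDerivAt (fun s : ℝ => g (x + s • v)) (dd v g (x + t • v)) t := by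
  have h1 := (smooth_diff hΩ hg ht).hasFDerivAt
  have h2 : HasDerivAt (fun s : ℝ => x + s • v) v t := by
    simpa using ((hasDerivAt_id t).smul_const v).const_add x
  exact h1.comp_hasDerivAt t h2

theorem line_mem (hΩ : IsOpen Ω) {x : E} (hx : x ∈ Ω) (v : E) :
    ∀ᶠ t in 𝓝 (0:ℝ), x + t • v ∈ Ω := by
  have : ContinuousAt (fun t : ℝ => x + t • v) 0 := by fun_prop
  exact this.eventually (by simpa using hΩ.mem_nhds hx)

theorem J2.line (hΩ : IsOpen Ω) (hg : ContDiffOn ℝ (⊤ : ℕ∞) g Ω) {x : E} (hx : x ∈ Ω) (v : E) :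
    J2 (fun t => g (x + t • v)) (g x) (dd v g x) (dd v (dd v g) x) := by
  refine ⟨by simp, fun t => dd v g (x + t • v), ?_, by simp, ?_⟩
  · filter_upwards [line_mem hΩ hx v] with t ht
    exact hasDerivAt_line hΩ hg x v t ht
  · simpa using hasDerivAt_line hΩ (dd_smooth hΩ hg v) x v 0 (by simpa using hx)

end DD

section Alg
variable {n : ℕ} {Γ : Set (Fin n → ℝ)} {f : (Fin n → ℝ) → ℝ}

theorem f_diff (hΓ : IsConvexInvariantCone Γ) (hf : IsConcaveEllipticHessianOp Γ f)
    {lam : Fin n → ℝ} (hl : lam ∈ Γ) : DifferentiableAt ℝ f lam :=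
  (hf.1.differentiableOn (by simp)).differentiableAt (hΓ.1.mem_nhds hl)

theorem fderiv_eq_sum (f : (Fin n → ℝ) → ℝ) (lam mu : Fin n → ℝ) :
    fderiv ℝ f lam mu = ∑ i, fpd f i lam * mu i := by
  conv_lhs => rw [pi_eq_sum_univ' mu]
  rw [map_sum]
  refine Finset.sum_congr rfl fun i _ => ?_
  simp [fpd, mul_comm]

theorem f_euler (hΓ : IsConvexInvariantCone Γ) (hf : IsConcaveEllipticHessianOp Γ f)
    {lam : Fin n → ℝ} (hl : lam ∈ Γ) : ∑ i, fpd f i lam * lam i = f lam := by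
  rw [← fderiv_eq_sum]
  have h1 : HasDerivAt (fun t : ℝ => f (t • lam)) (fderiv ℝ f lam lam) 1 := by
    have a : HasFDerivAt f (fderiv ℝ f lam) ((1:ℝ) • lam) := by
      rw [one_smul]; exact (f_diff hΓ hf hl).hasFDerivAt
    have b : HasDerivAt (fun t : ℝ => t • lam) lam 1 := by
      simpa using (hasDerivAt_id (1:ℝ)).smul_const lam
    exact a.comp_hasDerivAt 1 b
  have h2 : HasDerivAt (fun t : ℝ => f (t • lam)) (f lam) 1 := by
    have : HasDerivAt (fun t : ℝ => t * f lam) (f lam) 1 := by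
      simpa using (hasDerivAt_id (1:ℝ)).mul_const (f lam)
    refine this.congr_of_eventuallyEq ?_
    filter_upwards [lt_mem_nhds (show (0:ℝ) < 1 by norm_num)] with t ht
    exact hf.2.2.2.2.2 lam hl t ht
  exact h1.unique h2

theorem f_grad (hΓ : IsConvexInvariantCone Γ) (hf : IsConcaveEllipticHessianOp Γ f)
    {lam mu : Fin n → ℝ} (hl : lam ∈ Γ) (hm : mu ∈ Γ) : f mu ≤ ∑ i, fpd f i lam * mu i := by
  rw [← fderiv_eq_sum]
  have h1 : HasDerivAt (fun t : ℝ => f (lam + t • mu)) (fderiv ℝ f lam mu) 0 := by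
    have a : HasFDerivAt f (fderiv ℝ f lam) (lam + (0:ℝ) • mu) := by
      rw [zero_smul, add_zero]; exact (f_diff hΓ hf hl).hasFDerivAt
    have b : HasDerivAt (fun t : ℝ => lam + t • mu) mu 0 := by
      simpa using ((hasDerivAt_id (0:ℝ)).smul_const mu).const_add lam
    exact a.comp_hasDerivAt 0 b
  have h2 := h1.tendsto_slope_zero_right
  refine ge_of_tendsto h2 ?_
  filter_upwards [self_mem_nhdsWithin] with t ht
  have ht : 0 < t := ht
  have hc := hf.2.1.2 hl (hΓ.2.2.2.1 mu hm t ht) (show (0:ℝ) ≤ 1/2 by norm_num)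
    (show (0:ℝ) ≤ 1/2 by norm_num) (by norm_num)
  have hmem := hΓ.2.2.1 hl (hΓ.2.2.2.1 mu hm t ht) (show (0:ℝ) ≤ 1/2 by norm_num)
    (show (0:ℝ) ≤ 1/2 by norm_num) (by norm_num)
  have hh := hf.2.2.2.2.2 _ hmem 2 (by norm_num)
  have e : (2:ℝ) • ((1/2:ℝ) • lam + (1/2:ℝ) • t • mu) = lam + t • mu := by
    rw [smul_add, smul_smul, smul_smul]; norm_num
  rw [e] at hh
  rw [hf.2.2.2.2.2 mu hm t ht] at hc
  simp only [smul_eq_mul] at hc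
  have : t * f mu ≤ f (lam + t • mu) - f lam := by linarith
  simp only [zero_add, zero_smul, add_zero, smul_eq_mul]
  rw [← div_eq_inv_mul, le_div_iff₀ ht]; linarith

theorem f_grad_ds (hΓ : IsConvexInvariantCone Γ) (hf : IsConcaveEllipticHessianOp Γ f)
    {lam mu : Fin n → ℝ} (hl : lam ∈ Γ) (hm : mu ∈ Γ) {W : Matrix (Fin n) (Fin n) ℝ}
    (hW : W ∈ doublyStochastic ℝ (Fin n)) :
    f mu ≤ ∑ i, fpd f i lam * ∑ j, W i j * mu j := by
  obtain ⟨w, hw0, hw1, hw⟩ := exists_eq_sum_perm_of_mem_doublyStochastic hW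
  have hrow : ∀ i, ∑ j, W i j * mu j = ∑ σ, w σ * mu (σ i) := by
    intro i
    rw [← hw]
    simp only [Matrix.sum_apply, Matrix.smul_apply, Finset.sum_mul, smul_eq_mul]
    rw [Finset.sum_comm]
    refine Finset.sum_congr rfl fun σ _ => ?_
    simp [Equiv.Perm.permMatrix, PEquiv.toMatrix_apply, Equiv.toPEquiv_apply]
  simp only [hrow]
  calc f mu = ∑ σ, w σ * f mu := by rw [← Finset.sum_mul, hw1, one_mul]
    _ ≤ ∑ σ, w σ * ∑ i, fpd f i lam * mu (σ i) := by
        refine Finset.sum_le_sum fun σ _ => mul_le_mul_of_nonneg_left ?_ (hw0 σ)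
        rw [← hf.2.2.1 mu hm σ]
        exact f_grad hΓ hf hl (hΓ.2.2.2.2.2 mu hm σ)
    _ = _ := by
        simp only [Finset.mul_sum]
        rw [Finset.sum_comm]
        refine Finset.sum_congr rfl fun i _ => Finset.sum_congr rfl fun σ _ => by ring

theorem one_mem (hΓ : IsConvexInvariantCone Γ) {lam : Fin n → ℝ} (hl : lam ∈ Γ) :
    (fun _ => (1:ℝ)) ∈ Γ := by
  set t : ℝ := 1 + ∑ i, |lam i|
  have ht : 0 < t := by have : 0 ≤ ∑ i, |lam i| := by positivity
                        simp only [t]; linarith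
  have h1 : lam + (fun i => t - lam i) ∈ Γ := by
    refine hΓ.2.2.2.2.1 lam hl _ fun i => ?_
    have : |lam i| ≤ ∑ i, |lam i| :=
      Finset.single_le_sum (f := fun i => |lam i|) (fun j _ => abs_nonneg _) (Finset.mem_univ i)
    have := le_abs_self (lam i)
    simp only [t]; linarith
  have h2 := hΓ.2.2.2.1 _ h1 t⁻¹ (by positivity)
  convert h2 using 1
  ext i; simp; field_simp

theorem f_order (hΓ : IsConvexInvariantCone Γ) (hf : IsConcaveEllipticHessianOp Γ f)
    {lam : Fin n → ℝ} (hl : lam ∈ Γ) (i j : Fin n) :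
    (fpd f i lam - fpd f j lam) * (lam i - lam j) ≤ 0 := by
  by_cases hij : i = j
  · subst hij; simp
  have h1 := f_grad hΓ hf hl (hΓ.2.2.2.2.2 lam hl (Equiv.swap i j))
  rw [hf.2.2.1 lam hl, ← f_euler hΓ hf hl, ← sub_nonneg, ← Finset.sum_sub_distrib] at h1
  rw [← Finset.add_sum_erase _ _ (Finset.mem_univ i),
    ← Finset.add_sum_erase _ _ (show j ∈ Finset.univ.erase i by simp [Ne.symm hij])] at h1
  rw [Finset.sum_eq_zero] at h1
  · simp at h1; nlinarith
  · intro k hk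
    simp at hk
    simp [Equiv.swap_apply_of_ne_of_ne hk.2 hk.1]

end Alg

/-- Local data of the linearized equation at a point. -/
structure Good {n : ℕ} (u : EuclideanSpace ℝ (Fin n) → ℝ) (Ω : Set (EuclideanSpace ℝ (Fin n)))
    (c0 D₁ D₂ M N₂ Cs : ℝ) (x : EuclideanSpace ℝ (Fin n))
    (e : OrthonormalBasis (Fin n) ℝ (EuclideanSpace ℝ (Fin n))) (F lam : Fin n → ℝ) : Prop where
  hess : ∀ i v, H2 u x (e i) v = lam i * inner ℝ (e i) v
  pos : ∀ i, 0 < F i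
  euler : ∑ i, F i * lam i = 1
  sum_ge : c0 ≤ ∑ i, F i
  condD : ∀ i, D₁ < lam i → F i * lam i ≤ D₂
  big : ∀ i, D₁ < lam i → lam i ≤ M * (∑ j, F j) ^ N₂
  lower : ∀ i, -Cs ≤ lam i
  lin : ∀ y ∈ Ω, ∀ v : Fin n → EuclideanSpace ℝ (Fin n), Orthonormal ℝ v →
    1 ≤ ∑ i, F i * H2 u y (v i) (v i)

section Link
variable {n : ℕ} {u : EuclideanSpace ℝ (Fin n) → ℝ} {Ω : Set (EuclideanSpace ℝ (Fin n))}

theorem hess_eq (u : EuclideanSpace ℝ (Fin n) → ℝ) (x) (i j : Fin n) :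
    hessianMatrix u x i j = H2 u x (EuclideanSpace.single i 1) (EuclideanSpace.single j 1) := by
  simp [hessianMatrix, H2, iteratedFDeriv_two_apply]

theorem eigen_link (hΩ : IsOpen Ω) (hu : ContDiffOn ℝ (⊤ : ℕ∞) u Ω)
    {x : EuclideanSpace ℝ (Fin n)} (hx : x ∈ Ω) :
    ∃ e : OrthonormalBasis (Fin n) ℝ (EuclideanSpace ℝ (Fin n)),
      ∀ i v, H2 u x (e i) v = hessEigen u x i * inner ℝ (e i) v := by
  have hH : (hessianMatrix u x).IsHermitian := by
    ext i j
    simp [Matrix.conjTranspose_apply, hess_eq, H2_symm hΩ hu hx (EuclideanSpace.single i 1)]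
  refine ⟨hH.eigenvectorBasis, fun i v => ?_⟩
  have hb : ∀ a b : EuclideanSpace ℝ (Fin n), H2 u x a b
      = ∑ k, b k * ((hessianMatrix u x).mulVec a.ofLp) k := by
    intro a b
    have ea : a = ∑ j, a j • EuclideanSpace.single j (1:ℝ) := by
      ext k; simp [Finset.sum_apply, Pi.single_apply]
    have eb : b = ∑ j, b j • EuclideanSpace.single j (1:ℝ) := by
      ext k; simp [Finset.sum_apply, Pi.single_apply]
    conv_lhs => rw [eb]
    rw [map_sum]
    refine Finset.sum_congr rfl fun k _ => ?_
    rw [map_smul, smul_eq_mul]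
    congr 1
    rw [H2_symm hΩ hu hx]
    conv_lhs => rw [ea]
    rw [map_sum]
    simp [Matrix.mulVec, dotProduct, hess_eq, mul_comm]
  have he : hessEigen u x = hH.eigenvalues := by rw [hessEigen, dif_pos hH]
  rw [hb, hH.mulVec_eigenvectorBasis, he]
  simp [PiLp.inner_apply, Finset.mul_sum]
  refine Finset.sum_congr rfl fun k _ => by ring

theorem H2_quad {e : OrthonormalBasis (Fin n) ℝ (EuclideanSpace ℝ (Fin n))} {lam : Fin n → ℝ}
    {x : EuclideanSpace ℝ (Fin n)}
    (h : ∀ i v, H2 u x (e i) v = lam i * inner ℝ (e i) v) (v w : EuclideanSpace ℝ (Fin n)) :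
    H2 u x v w = ∑ j, lam j * (inner ℝ (e j) v * inner ℝ (e j) w) := by
  conv_lhs => rw [← e.sum_repr' v]
  simp only [map_sum, map_smul, sum_apply, smul_apply, h,
    smul_eq_mul]
  exact Finset.sum_congr rfl fun k _ => by ring

theorem good_exists {Γ : Set (Fin n → ℝ)} {f : (Fin n → ℝ) → ℝ} (hn : 2 ≤ n)
    (hΓ : IsConvexInvariantCone Γ) (hf : IsConcaveEllipticHessianOp Γ f)
    {N₁ N₂ : ℝ} (hN₁ : 0 < N₁) (hN : ConditionN Γ f N₁ N₂)
    {D₁ D₂ : ℝ} (hD₁ : 0 < D₁) (hD₂ : 0 < D₂)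
    (hc0 : 0 < f (fun _ => 1))
    (hΩ : IsOpen Ω) (hu : ContDiffOn ℝ (⊤ : ℕ∞) u Ω)
    (ha : ∀ x ∈ Ω, hessEigen u x ∈ Γ) (hs : ∀ x ∈ Ω, f (hessEigen u x) = 1)
    (hD : ConditionD f u Ω D₁ D₂) {x : EuclideanSpace ℝ (Fin n)} (hx : x ∈ Ω) :
    ∃ e F lam, Good u Ω (f (fun _ => 1)) D₁ D₂ (D₂ * N₁) N₂
      (n * (n * D₂ / f (fun _ => 1) + D₁)) x e F lam := by
  obtain ⟨e, he⟩ := eigen_link hΩ hu hx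
  have hl := ha x hx
  set lam := hessEigen u x with hlam
  set F : Fin n → ℝ := fun i => fpd f i lam with hF
  have hpos : ∀ i, 0 < F i := hf.2.2.2.1 lam hl
  have hne : Nonempty (Fin n) := ⟨⟨0, by omega⟩⟩
  have hS : 0 < ∑ i, F i := Finset.sum_pos (fun i _ => hpos i) Finset.univ_nonempty
  have hge : f (fun _ => 1) ≤ ∑ i, F i := by
    simpa using f_grad hΓ hf hl (one_mem hΓ hl)
  have heu : ∑ i, F i * lam i = 1 := by rw [f_euler hΓ hf hl, hs x hx]
  have hDx : ∀ i, D₁ < lam i → F i * lam i ≤ D₂ := hD x hx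
  refine ⟨e, F, lam, he, hpos, heu, hge, hDx, ?_, ?_, ?_⟩
  · intro i hi
    have h1 := hN lam hl (hs x hx) _ hS le_rfl i
    have hp : 0 < (∑ j, F j) ^ N₂ := Real.rpow_pos_of_pos hS _
    rw [div_le_iff₀ (by positivity)] at h1
    have h2 := hDx i hi
    have hli : 0 < lam i := hD₁.trans hi
    calc lam i = lam i * 1 := by ring
      _ ≤ lam i * (F i * (N₁ * (∑ j, F j) ^ N₂)) := mul_le_mul_of_nonneg_left h1 hli.le
      _ = (F i * lam i) * (N₁ * (∑ j, F j) ^ N₂) := by ring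
      _ ≤ D₂ * (N₁ * (∑ j, F j) ^ N₂) := mul_le_mul_of_nonneg_right h2 (by positivity)
      _ = _ := by ring
  · obtain ⟨k0, -, hk0⟩ := Finset.exists_min_image Finset.univ lam Finset.univ_nonempty
    obtain ⟨k, hk1, hk2⟩ := Finset.exists_max_image
      (Finset.univ.filter fun k => lam k = lam k0) F ⟨k0, by simp⟩
    simp only [Finset.mem_filter, Finset.mem_univ, true_and] at hk1 hk2
    have hmin : ∀ i, lam k ≤ lam i := fun i => by rw [hk1]; exact hk0 i (Finset.mem_univ i)
    have hmax : ∀ i, F i ≤ F k := by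
      intro i
      by_cases h : lam i = lam k0
      · exact hk2 i h
      · have h1 := f_order hΓ hf hl i k
        have h2 : 0 < lam i - lam k := by
          rw [hk1]; exact sub_pos.2 (lt_of_le_of_ne (hk0 i (Finset.mem_univ i)) (Ne.symm h))
        by_contra h3
        push Not at h3
        nlinarith [mul_pos (sub_pos.2 h3) h2]
    have hnpos : (0:ℝ) < n := by positivity
    have hSk : ∑ i, F i ≤ n * F k := by
      calc ∑ i, F i ≤ ∑ _i : Fin n, F k := Finset.sum_le_sum fun i _ => hmax i
        _ = _ := by simp
    have hterm : ∀ i, F i * lam i ≤ D₂ + D₁ * F i := by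
      intro i
      by_cases h : D₁ < lam i
      · have := hDx i h
        have := mul_pos hD₁ (hpos i)
        linarith
      · push Not at h
        nlinarith [hpos i]
    have hsum : F k * (-lam k) ≤ n * D₂ + D₁ * ∑ i, F i := by
      have h1 : ∑ i, F i * lam i = F k * lam k + ∑ i ∈ Finset.univ.erase k, F i * lam i :=
        (Finset.add_sum_erase _ _ (Finset.mem_univ k)).symm
      have h2 : ∑ i ∈ Finset.univ.erase k, F i * lam i
          ≤ ∑ i ∈ Finset.univ.erase k, (D₂ + D₁ * F i) :=
        Finset.sum_le_sum fun i _ => hterm i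
      have h3 : ∑ i ∈ Finset.univ.erase k, (D₂ + D₁ * F i) ≤ ∑ i, (D₂ + D₁ * F i) :=
        Finset.sum_le_sum_of_subset_of_nonneg (Finset.erase_subset _ _)
          fun i _ _ => by have := mul_pos hD₁ (hpos i); linarith
      have h4 : ∑ i, (D₂ + D₁ * F i) = n * D₂ + D₁ * ∑ i, F i := by
        rw [Finset.sum_add_distrib, ← Finset.mul_sum]; simp
      linarith
    have hfin : -lam k ≤ n * (n * D₂ / f (fun _ => 1) + D₁) := by
      by_cases hneg : 0 ≤ lam k
      · have : 0 ≤ n * (n * D₂ / f (fun _ => 1) + D₁) := by positivity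
        linarith
      push Not at hneg
      have h5 : (∑ i, F i) * (-lam k) ≤ n * (n * D₂ + D₁ * ∑ i, F i) := by
        calc _ ≤ (n * F k) * (-lam k) := mul_le_mul_of_nonneg_right hSk (by linarith)
          _ = n * (F k * (-lam k)) := by ring
          _ ≤ _ := mul_le_mul_of_nonneg_left hsum hnpos.le
      have h6 : n * D₂ ≤ n * D₂ / f (fun _ => 1) * ∑ i, F i := by
        rw [div_mul_eq_mul_div, le_div_iff₀ hc0]
        exact mul_le_mul_of_nonneg_left hge (by positivity)
      have h7 : (∑ i, F i) * (-lam k) ≤ (∑ i, F i) * (n * (n * D₂ / f (fun _ => 1) + D₁)) := by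
        have := mul_le_mul_of_nonneg_left h6 hnpos.le
        calc _ ≤ _ := h5
          _ = n * (n * D₂) + n * (D₁ * ∑ i, F i) := by ring
          _ ≤ n * (n * D₂ / f (fun _ => 1) * ∑ i, F i) + n * (D₁ * ∑ i, F i) := by linarith
          _ = _ := by ring
      exact le_of_mul_le_mul_left h7 hS
    intro i
    linarith [hmin i]
  · intro y hy v hv
    obtain ⟨b, hb⟩ := eigen_link hΩ hu hy
    obtain ⟨v', hv'⟩ : ∃ v' : OrthonormalBasis (Fin n) ℝ (EuclideanSpace ℝ (Fin n)),
        ∀ i, v' i = v i := by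
      obtain ⟨v', h⟩ := Orthonormal.exists_orthonormalBasis_extension_of_card_eq
        (𝕜 := ℝ) (E := EuclideanSpace ℝ (Fin n)) (ι := Fin n) (by simp) (v := v) (s := Set.univ)
        (hv.comp _ Subtype.val_injective)
      exact ⟨v', fun i => h i (Set.mem_univ i)⟩
    have hW : (Matrix.of fun i j => (inner ℝ (b j) (v i)) ^ 2 : Matrix (Fin n) (Fin n) ℝ)
        ∈ doublyStochastic ℝ (Fin n) := by
      rw [mem_doublyStochastic_iff_sum]
      refine ⟨fun i j => by simp; positivity, fun i => ?_, fun j => ?_⟩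
      · have := b.sum_sq_norm_inner_right (v i)
        simpa [hv.1 i] using this
      · have := v'.sum_sq_norm_inner_right (b j)
        simpa [hv', real_inner_comm] using this
    have := f_grad_ds hΓ hf hl (ha y hy) hW
    rw [hs y hy] at this
    refine this.trans (le_of_eq ?_)
    refine Finset.sum_congr rfl fun i _ => ?_
    congr 1
    rw [H2_quad hb]
    refine Finset.sum_congr rfl fun j _ => ?_
    simp; ring

end Link

section Third
variable {n : ℕ} {u : EuclideanSpace ℝ (Fin n) → ℝ} {Ω : Set (EuclideanSpace ℝ (Fin n))}
  {c0 D₁ D₂ M N₂ Cs : ℝ} {x : EuclideanSpace ℝ (Fin n)}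
  {e : OrthonormalBasis (Fin n) ℝ (EuclideanSpace ℝ (Fin n))} {F lam : Fin n → ℝ}

theorem J2.H2line (hΩ : IsOpen Ω) (hu : ContDiffOn ℝ (⊤ : ℕ∞) u Ω) (hx : x ∈ Ω)
    (q v z : EuclideanSpace ℝ (Fin n)) :
    J2 (fun t : ℝ => H2 u (x + t • q) v z) (H2 u x v z) (dd q (dd v (dd z u)) x)
      (dd q (dd q (dd v (dd z u))) x) := by
  have h := J2.line hΩ (dd_smooth hΩ (dd_smooth hΩ hu z) v) hx q
  refine (h.congr ?_).cast (dd_dd hΩ hu hx v z).symm rfl rfl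
  filter_upwards [line_mem hΩ hx q] with t ht
  exact (dd_dd hΩ hu ht v z).symm

theorem dd_rot3 (hΩ : IsOpen Ω) (hu : ContDiffOn ℝ (⊤ : ℕ∞) u Ω)
    (v a b : EuclideanSpace ℝ (Fin n)) :
    Set.EqOn (dd v (dd a (dd b u))) (dd a (dd b (dd v u))) Ω := by
  intro x hx
  rw [dd_comm hΩ (dd_smooth hΩ hu b) v a hx]
  exact dd_congr hΩ (dd_comm hΩ hu v b) a hx

theorem Good.lin1 (G : Good u Ω c0 D₁ D₂ M N₂ Cs x e F lam) (hΩ : IsOpen Ω)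
    (hu : ContDiffOn ℝ (⊤ : ℕ∞) u Ω) (hx : x ∈ Ω) (v : EuclideanSpace ℝ (Fin n)) :
    ∑ i, F i * dd (e i) (dd (e i) (dd v u)) x = 0 := by
  have h := J2.sum Finset.univ (fun i => (J2.H2line hΩ hu hx v (e i) (e i)).const_mul (F i))
  have hm := h.localMin (by
    filter_upwards [line_mem hΩ hx v] with t ht
    refine le_trans (le_of_eq ?_) (G.lin _ ht e e.orthonormal)
    rw [← G.euler]
    refine Finset.sum_congr rfl fun i _ => ?_
    rw [G.hess]; simp)
  rw [← hm.1]
  refine Finset.sum_congr rfl fun i _ => ?_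
  rw [dd_rot3 hΩ hu v (e i) (e i) hx]

theorem dd_rot4 (hΩ : IsOpen Ω) (hu : ContDiffOn ℝ (⊤ : ℕ∞) u Ω) (hx : x ∈ Ω)
    (q a : EuclideanSpace ℝ (Fin n)) :
    dd q (dd q (dd a (dd a u))) x = dd a (dd a (dd q (dd q u))) x := by
  rw [dd_congr hΩ (dd_rot3 hΩ hu q a a) q hx]
  rw [dd_rot3 hΩ (dd_smooth hΩ hu q) q a a hx]

theorem J2.poly (a b c : ℝ) : J2 (fun t => a + b * t + c * t ^ 2) a b (2 * c) := by
  have h := ((J2.const a).add (J2.id.const_mul b)).add ((J2.id.mul J2.id).const_mul c)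
  refine (h.congr (Eventually.of_forall fun t => by ring)).cast ?_ ?_ ?_ <;> ring

/-- rotated frame -/
def rotV (e : OrthonormalBasis (Fin n) ℝ (EuclideanSpace ℝ (Fin n))) (p : Fin n)
    (w : Fin n → ℝ) (t : ℝ) (i : Fin n) : EuclideanSpace ℝ (Fin n) :=
  if i = p then (1 - (∑ k, w k ^ 2) * t ^ 2 / 4) • e p + t • ∑ k, w k • e k
  else (1 + (∑ k, w k ^ 2) * t ^ 2 / 4) • e i + (-(w i * t)) • e p
    + (-(w i / 2 * t ^ 2)) • ∑ k, w k • e k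

theorem rotV_inner (e : OrthonormalBasis (Fin n) ℝ (EuclideanSpace ℝ (Fin n))) {p : Fin n}
    {w : Fin n → ℝ} (hw : w p = 0) (t : ℝ) (i j : Fin n) :
    inner ℝ (rotV e p w t i) (rotV e p w t j)
      = if i = j then (1 + (∑ k, w k ^ 2) * t ^ 2 / 4) ^ 2 else 0 := by
  have h1 : ∀ i, inner ℝ (e i) (∑ k, w k • e k) = w i := fun i => by
    simp [inner_sum, inner_smul_right, OrthonormalBasis.inner_eq_ite]
  have h1' : ∀ i, inner ℝ (∑ k, w k • e k) (e i) = w i := fun i => by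
    rw [real_inner_comm, h1]
  have h2 : inner ℝ (∑ k, w k • e k) (∑ k, w k • e k) = ∑ k, w k ^ 2 := by
    rw [sum_inner]
    simp only [inner_smul_left, h1]
    refine Finset.sum_congr rfl fun i _ => by simp; ring
  simp only [rotV]
  generalize (∑ k, w k • e k) = W at *
  generalize (∑ k, w k ^ 2) = τ at *
  by_cases hi : i = p <;> by_cases hj : j = p
  · subst hi; subst hj
    simp only [if_true, inner_add_left, inner_add_right, inner_smul_left, inner_smul_right, h1, h1',
      h2, hw, OrthonormalBasis.inner_eq_ite, conj_trivial]
    ring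
  · subst hi
    simp only [if_true, hj, Ne.symm hj, if_false, inner_add_left, inner_add_right, inner_smul_left,
      inner_smul_right, h1, h1', h2, hw, OrthonormalBasis.inner_eq_ite, conj_trivial]
    ring
  · subst hj
    simp only [if_true, hi, if_false, inner_add_left, inner_add_right, inner_smul_left,
      inner_smul_right, h1, h1', h2, hw, OrthonormalBasis.inner_eq_ite, conj_trivial]
    ring
  · by_cases hij : i = j
    · subst hij
      simp only [if_true, hi, Ne.symm hi, if_false, inner_add_left, inner_add_right, inner_smul_left,
        inner_smul_right, h1, h1', h2, hw, OrthonormalBasis.inner_eq_ite, conj_trivial]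
      ring
    · simp only [if_true, hi, hj, hij, Ne.symm hj, if_false, inner_add_left,
        inner_add_right, inner_smul_left, inner_smul_right, h1, h1', h2, hw,
        OrthonormalBasis.inner_eq_ite, conj_trivial]
      ring

theorem rotV_orthonormal (e : OrthonormalBasis (Fin n) ℝ (EuclideanSpace ℝ (Fin n))) {p : Fin n}
    {w : Fin n → ℝ} (hw : w p = 0) (t : ℝ) :
    Orthonormal ℝ (fun i => (1 + (∑ k, w k ^ 2) * t ^ 2 / 4)⁻¹ • rotV e p w t i) := by
  have hp : 0 < 1 + (∑ k, w k ^ 2) * t ^ 2 / 4 := by positivity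
  rw [orthonormal_iff_ite]
  intro i j
  rw [inner_smul_left, inner_smul_right, rotV_inner e hw]
  split_ifs
  · simp only [conj_trivial]; field_simp
  · simp

/-- quadratic form of a moving combination of three vectors -/
theorem J2.quad3 (hΩ : IsOpen Ω) (hu : ContDiffOn ℝ (⊤ : ℕ∞) u Ω) (hx : x ∈ Ω)
    (q A B C : EuclideanSpace ℝ (Fin n)) {α β γ : ℝ → ℝ} {a0 a1 a2 b1 b2 g1 g2 : ℝ}
    (hα : J2 α a0 a1 a2) (hβ : J2 β 0 b1 b2) (hγ : J2 γ 0 g1 g2) :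
    ∃ r, J2 (fun t : ℝ => H2 u (x + t • q) (α t • A + β t • B + γ t • C)
        (α t • A + β t • B + γ t • C)) (a0 ^ 2 * H2 u x A A) r
      (a0 ^ 2 * dd q (dd q (dd A (dd A u))) x + 4 * a0 * a1 * dd q (dd A (dd A u)) x
        + (2 * a1 ^ 2 + 2 * a0 * a2) * H2 u x A A
        + 2 * b1 ^ 2 * H2 u x B B + 2 * g1 ^ 2 * H2 u x C C
        + 2 * ((a0 * b2 + 2 * a1 * b1) * H2 u x A B + 2 * a0 * b1 * dd q (dd A (dd B u)) x)
        + 2 * ((a0 * g2 + 2 * a1 * g1) * H2 u x A C + 2 * a0 * g1 * dd q (dd A (dd C u)) x)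
        + 4 * b1 * g1 * H2 u x B C) := by
  have L := fun v z => J2.H2line hΩ hu hx q v z
  have h := ((((((hα.mul hα).mul (L A A)).add ((hβ.mul hβ).mul (L B B))).add
    ((hγ.mul hγ).mul (L C C))).add (((hα.mul hβ).mul (L A B)).const_mul 2)).add
    (((hα.mul hγ).mul (L A C)).const_mul 2)).add (((hβ.mul hγ).mul (L B C)).const_mul 2)
  refine ⟨_, (h.congr ?_).cast ?_ rfl ?_⟩
  · filter_upwards [line_mem hΩ hx q] with t ht
    simp only [map_add, map_smul, add_apply, smul_apply, smul_eq_mul]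
    rw [H2_symm hΩ hu ht B A, H2_symm hΩ hu ht C A, H2_symm hΩ hu ht C B]
    ring
  · ring
  · ring

theorem Good.lin2 (G : Good u Ω c0 D₁ D₂ M N₂ Cs x e F lam) (hΩ : IsOpen Ω)
    (hu : ContDiffOn ℝ (⊤ : ℕ∞) u Ω) (hx : x ∈ Ω) (p : Fin n) (w : Fin n → ℝ) (hw : w p = 0) :
    0 ≤ ∑ i, F i * dd (e i) (dd (e i) (dd (e p) (dd (e p) u))) x
      - 4 * ∑ i, (F i - F p) * (w i * dd (e i) (dd (e p) (dd (e p) u)) x)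
      + 2 * ∑ i, (F i - F p) * ((lam p - lam i) * w i ^ 2) := by
  set τ := ∑ k, w k ^ 2 with hτ
  set W := ∑ k, w k • e k with hW
  set T : Fin n → ℝ := fun k => dd (e k) (dd (e p) (dd (e p) u)) x with hT
  have hWi : ∀ i, inner ℝ (e i) W = w i := fun i => by
    simp [hW, inner_sum, inner_smul_right, OrthonormalBasis.inner_eq_ite]
  have hAW : ∀ i, H2 u x (e i) W = lam i * w i := fun i => by rw [G.hess, hWi]
  have hWW : H2 u x W W = ∑ k, lam k * w k ^ 2 := by
    rw [H2_quad G.hess]; simp only [hWi]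
    exact Finset.sum_congr rfl fun i _ => by ring
  have hpW : dd (e p) (dd (e p) (dd W u)) x = ∑ k, w k * T k := by
    rw [← dd_rot3 hΩ hu W (e p) (e p) hx]
    conv_lhs => simp only [dd]
    rw [hW, map_sum]
    simp only [map_smul, smul_eq_mul]
    rfl
  have hij : ∀ i j, H2 u x (e i) (e j) = if i = j then lam i else 0 := fun i j => by
    rw [G.hess, OrthonormalBasis.inner_eq_ite]; split_ifs <;> simp
  have key : ∀ i, ∃ r, J2 (fun t : ℝ => H2 u (x + t • e p) (rotV e p w t i) (rotV e p w t i))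
      (lam i) r (dd (e i) (dd (e i) (dd (e p) (dd (e p) u))) x
        + (if i = p then -(lam p * τ) + 4 * (∑ k, w k * T k) + 2 * ∑ k, lam k * w k ^ 2
          else lam i * τ - 4 * (w i * T i) + 2 * (lam p - lam i) * w i ^ 2)) := by
    intro i
    by_cases hi : i = p
    · subst hi
      obtain ⟨r, hr⟩ := J2.quad3 hΩ hu hx (e i) (e i) (e i) W (J2.poly 1 0 (-τ / 4))
        (J2.const 0) J2.id
      refine ⟨r, (hr.congr (Eventually.of_forall fun t => ?_)).cast ?_ rfl ?_⟩
      · have : rotV e i w t i = (1 + 0 * t + -τ / 4 * t ^ 2) • e i + (0:ℝ) • e i + t • W := by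
          simp only [rotV, if_true, zero_smul, add_zero]
          congr 2
          ring
        rw [this]
      · rw [hij]; simp
      · rw [hij, hAW, hWW, hpW]
        simp only [if_true]; ring
    · obtain ⟨r, hr⟩ := J2.quad3 hΩ hu hx (e p) (e i) (e p) W (J2.poly 1 0 (τ / 4))
        ((J2.poly 0 (-w i) 0)) (J2.poly 0 0 (-w i / 2))
      refine ⟨r, (hr.congr (Eventually.of_forall fun t => ?_)).cast ?_ rfl ?_⟩
      · have : rotV e p w t i = (1 + 0 * t + τ / 4 * t ^ 2) • e i
            + (0 + -w i * t + 0 * t ^ 2) • e p + (0 + 0 * t + -w i / 2 * t ^ 2) • W := by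
          have a1 : 1 + 0 * t + τ / 4 * t ^ 2 = 1 + τ * t ^ 2 / 4 := by ring
          have a2 : 0 + -w i * t + 0 * t ^ 2 = -(w i * t) := by ring
          have a3 : 0 + 0 * t + -w i / 2 * t ^ 2 = -(w i / 2 * t ^ 2) := by ring
          rw [a1, a2, a3]
          simp only [rotV, hi, if_false]
          rfl
        rw [this]
      · rw [hij]; simp
      · rw [dd_rot4 hΩ hu hx (e p) (e i)]
        have e1 : dd (e p) (dd (e i) (dd (e p) u)) x = T i :=
          dd_comm hΩ (dd_smooth hΩ hu (e p)) (e p) (e i) hx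
        rw [e1]
        simp only [hij, hAW, hi, if_true, if_false, hWW]; ring
  choose r hr using key
  have h := (J2.sum Finset.univ (fun i => (hr i).const_mul (F i))).add
    (((J2.poly 1 0 (τ / 4)).mul (J2.poly 1 0 (τ / 4))).const_mul (-1))
  have hm := h.localMin (by
    filter_upwards [line_mem hΩ hx (e p)] with t ht
    have h1 := G.lin _ ht _ (rotV_orthonormal e hw t)
    have hp : 0 < 1 + τ * t ^ 2 / 4 := by positivity
    have e1 : ∑ i, F i * H2 u (x + t • e p) ((1 + τ * t ^ 2 / 4)⁻¹ • rotV e p w t i)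
        ((1 + τ * t ^ 2 / 4)⁻¹ • rotV e p w t i)
        = ((1 + τ * t ^ 2 / 4) ^ 2)⁻¹ * ∑ i, F i * H2 u (x + t • e p) (rotV e p w t i)
          (rotV e p w t i) := by
      rw [Finset.mul_sum]
      refine Finset.sum_congr rfl fun i _ => ?_
      simp only [map_smul, smul_apply, smul_eq_mul]
      field_simp
    rw [e1, ← div_eq_inv_mul, le_div_iff₀ (by positivity)] at h1
    rw [G.euler]
    have e2 : (1 + 0 * t + τ / 4 * t ^ 2) = 1 + τ * t ^ 2 / 4 := by ring
    rw [e2]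
    linarith)
  have h2 := hm.2
  refine h2.trans (le_of_eq ?_)
  have e3 : ∀ i, F i * (dd (e i) (dd (e i) (dd (e p) (dd (e p) u))) x
        + (if i = p then -(lam p * τ) + 4 * (∑ k, w k * T k) + 2 * ∑ k, lam k * w k ^ 2
          else lam i * τ - 4 * (w i * T i) + 2 * (lam p - lam i) * w i ^ 2))
      = F i * dd (e i) (dd (e i) (dd (e p) (dd (e p) u))) x + τ * (F i * lam i)
        - 4 * (F i * (w i * T i)) + 2 * (F i * ((lam p - lam i) * w i ^ 2))
        + (if i = p then F p * (-(2 * (lam p * τ)) + 4 * (∑ k, w k * T k)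
          + 2 * ∑ k, lam k * w k ^ 2) else 0) := by
    intro i
    by_cases hi : i = p
    · subst hi; simp only [if_true, hw]; ring
    · simp only [hi, if_false]; ring
  simp only [e3, Finset.sum_add_distrib, Finset.sum_sub_distrib, ← Finset.mul_sum, G.euler,
    Finset.sum_ite_eq', Finset.mem_univ, if_true, sub_mul]
  have e4 : lam p * τ = ∑ k, lam p * w k ^ 2 := by rw [hτ, Finset.mul_sum]
  rw [e4]
  simp only [Finset.mul_sum]
  have e5 : ∑ i, 2 * (lam p * w i ^ 2) = 2 * ∑ i, lam p * w i ^ 2 := by rw [Finset.mul_sum]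
  simp only [mul_add, mul_sub, Finset.sum_sub_distrib, ← Finset.mul_sum, mul_neg]
  ring

end Third

section AlgEst
variable {n : ℕ}

theorem sq_le_of_sum {z : Fin n → ℝ} {d : ℝ} (h : ∑ i, z i ^ 2 ≤ d ^ 2) (i : Fin n) :
    z i ^ 2 ≤ d ^ 2 :=
  (Finset.single_le_sum (f := fun i => z i ^ 2) (fun _ _ => sq_nonneg _) (Finset.mem_univ i)).trans h

theorem grad_alg (F lam R z : Fin n → ℝ) {η g d A α D₁ D₂ M N₂ : ℝ}
    (hF : ∀ i, 0 < F i) (hd : 0 < d) (hA : A = 1 / (28 * d ^ 2)) (hα : 1 ≤ α) (hη : 0 < η)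
    (hg : 0 < g) (hD₂ : 0 < D₂)
    (hD : ∀ i, D₁ < lam i → F i * lam i ≤ D₂)
    (hbig : ∀ i, D₁ < lam i → lam i ≤ M * (∑ j, F j) ^ N₂)
    (hz : ∑ i, z i ^ 2 ≤ d ^ 2) (hR : ∑ i, (η * R i) ^ 2 = g ^ 2)
    (heq : ∀ i, lam i * (η * R i) / g ^ 2 = α * R i - A * z i)
    (hineq : -∑ i, F i * (α * R i - A * z i) ^ 2 - α / η - α * ∑ i, F i * R i ^ 2
      + A * ∑ i, F i ≤ 0) :
    g ^ 2 ≤ n * (2 * A * d / α) ^ 2 * η ^ 2 ∨ g ^ 2 ≤ 2 * D₁ * η / α ∨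
      (g ^ 2 ≤ 2 * η / α * (M * (∑ i, F i) ^ N₂) ∧
        A * (∑ i, F i) / 2 ≤ (α + (2 * α ^ 2 + α) * (2 * D₂ / α)) / η) := by
  have hA0 : 0 < A := by rw [hA]; positivity
  have hAd : A * d ^ 2 = 1 / 28 := by rw [hA]; field_simp
  have hα0 : 0 < α := by linarith
  by_cases hc1 : ∀ i, α * |R i| ≤ 2 * A * d
  · left
    rw [← hR]
    have : ∀ i ∈ Finset.univ, (η * R i) ^ 2 ≤ (2 * A * d / α) ^ 2 * η ^ 2 := by
      intro i _
      have h1 : |R i| ≤ 2 * A * d / α := by rw [le_div_iff₀ hα0]; linarith [hc1 i]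
      have h2 : R i ^ 2 ≤ (2 * A * d / α) ^ 2 := by
        rw [← sq_abs]; exact pow_le_pow_left₀ (abs_nonneg _) h1 2
      nlinarith [mul_le_mul_of_nonneg_right h2 (sq_nonneg η)]
    refine (Finset.sum_le_sum this).trans (le_of_eq ?_)
    simp; ring
  right
  by_cases hc2 : g ^ 2 ≤ 2 * D₁ * η / α
  · left; exact hc2
  right
  have hlam : ∀ i, 2 * A * d < α * |R i| → α * g ^ 2 / (2 * η) ≤ lam i := by
    intro i hi
    have hR0 : 0 < |R i| := by
      by_contra h
      have : |R i| = 0 := le_antisymm (not_lt.1 h) (abs_nonneg _)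
      rw [this] at hi
      have : 0 < 2 * A * d := by positivity
      linarith
    have hR2 : 0 < R i ^ 2 := by rw [← sq_abs]; positivity
    have hzi : |z i| ≤ d := abs_le_of_sq_le_sq (sq_le_of_sum hz i) hd.le
    have h1 : A * z i * R i ≤ α * R i ^ 2 / 2 := by
      calc A * z i * R i ≤ |A * z i * R i| := le_abs_self _
        _ = A * |z i| * |R i| := by rw [abs_mul, abs_mul, abs_of_pos hA0]
        _ ≤ A * d * |R i| := by gcongr
        _ ≤ (α * |R i| / 2) * |R i| := by gcongr; linarith
        _ = α * |R i| ^ 2 / 2 := by ring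
        _ = _ := by rw [sq_abs]
    have h2 := heq i
    have h3 : lam i * η / g ^ 2 * R i ^ 2 = α * R i ^ 2 - A * z i * R i := by
      calc _ = lam i * (η * R i) / g ^ 2 * R i := by ring
        _ = _ := by rw [h2]; ring
    have h4 : α / 2 ≤ lam i * η / g ^ 2 := by
      refine le_of_mul_le_mul_right (a := R i ^ 2) ?_ hR2
      rw [h3]; linarith
    rw [le_div_iff₀ (by positivity)] at h4
    rw [div_le_iff₀ (by positivity)]
    linarith
  push Not at hc2
  have hgD : D₁ < α * g ^ 2 / (2 * η) := by
    rw [div_lt_iff₀ hα0] at hc2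
    rw [lt_div_iff₀ (by positivity)]; linarith
  constructor
  · push Not at hc1
    obtain ⟨i, hi⟩ := hc1
    have h1 := hlam i hi
    have h2 := hbig i (hgD.trans_le h1)
    have h3 := h1.trans h2
    rw [div_le_iff₀ (by positivity)] at h3
    rw [div_mul_eq_mul_div, le_div_iff₀ hα0]; linarith
  · have hterm : ∀ i, F i * (α * R i - A * z i) ^ 2 + α * (F i * R i ^ 2) ≤
        (2 * α ^ 2 + α) * (2 * D₂ / (α * η)) * ((η * R i) ^ 2 / g ^ 2) + 14 * A ^ 2 * d ^ 2 * F i := by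
      intro i
      have hFi := hF i
      have hz2 := sq_le_of_sum hz i
      have h1 : F i * (α * R i - A * z i) ^ 2 + α * (F i * R i ^ 2) ≤
          (2 * α ^ 2 + α) * (F i * R i ^ 2) + 2 * A ^ 2 * d ^ 2 * F i := by
        have : (α * R i - A * z i) ^ 2 ≤ 2 * α ^ 2 * R i ^ 2 + 2 * A ^ 2 * z i ^ 2 := by
          nlinarith [sq_nonneg (α * R i + A * z i)]
        have h3 : 2 * A ^ 2 * z i ^ 2 ≤ 2 * A ^ 2 * d ^ 2 := by gcongr
        have := mul_le_mul_of_nonneg_left (this.trans (add_le_add_right h3 _)) hFi.le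
        linarith
      have h2 : (2 * α ^ 2 + α) * (F i * R i ^ 2) ≤
          (2 * α ^ 2 + α) * (2 * D₂ / (α * η)) * ((η * R i) ^ 2 / g ^ 2)
            + 12 * A ^ 2 * d ^ 2 * F i := by
        by_cases hi : α * |R i| ≤ 2 * A * d
        · have h3 : (α * R i) ^ 2 ≤ (2 * A * d) ^ 2 := by
            rw [← sq_abs, abs_mul, abs_of_pos hα0]
            exact pow_le_pow_left₀ (by positivity) hi 2
          have h4 : (2 * α ^ 2 + α) * R i ^ 2 ≤ 12 * A ^ 2 * d ^ 2 := by
            have : α * R i ^ 2 ≤ α ^ 2 * R i ^ 2 := by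
              gcongr; nlinarith
            nlinarith
          have h5 := mul_le_mul_of_nonneg_left h4 hFi.le
          have h6 : 0 ≤ (2 * α ^ 2 + α) * (2 * D₂ / (α * η)) * ((η * R i) ^ 2 / g ^ 2) := by
            positivity
          linarith
        · push Not at hi
          have h3 := hlam i hi
          have h4 := hD i (hgD.trans_le h3)
          have h5 : F i * (α * g ^ 2 / (2 * η)) ≤ D₂ :=
            (mul_le_mul_of_nonneg_left h3 hFi.le).trans h4
          have h6 : F i ≤ D₂ * (2 * η) / (α * g ^ 2) := by
            rw [le_div_iff₀ (by positivity)]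
            rw [mul_div_assoc', div_le_iff₀ (by positivity)] at h5
            linarith
          have h7 : F i * R i ^ 2 ≤ (2 * D₂ / (α * η)) * ((η * R i) ^ 2 / g ^ 2) := by
            calc _ ≤ D₂ * (2 * η) / (α * g ^ 2) * R i ^ 2 := by gcongr
              _ = _ := by field_simp
          have h8 : 0 ≤ 12 * A ^ 2 * d ^ 2 * F i := by positivity
          have := mul_le_mul_of_nonneg_left h7 (show 0 ≤ 2 * α ^ 2 + α by positivity)
          linarith
      linarith
    have hs := Finset.sum_le_sum fun i (_ : i ∈ Finset.univ) => hterm i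
    simp only [Finset.sum_add_distrib, ← Finset.mul_sum, ← Finset.sum_div] at hs
    rw [hR, div_self (by positivity), mul_one] at hs
    have h14 : 14 * A ^ 2 * d ^ 2 = A / 2 := by
      calc _ = 14 * A * (A * d ^ 2) := by ring
        _ = _ := by rw [hAd]; ring
    rw [h14] at hs
    have : (α + (2 * α ^ 2 + α) * (2 * D₂ / α)) / η
        = α / η + (2 * α ^ 2 + α) * (2 * D₂ / (α * η)) := by field_simp
    rw [this]
    linarith

theorem hess_alg (F lam R z T Lq : Fin n → ℝ) (p : Fin n) {η d A β D₁ D₂ Cs : ℝ}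
    (hF : ∀ i, 0 < F i) (hd : 0 < d) (hA : A = 1 / (4 * d ^ 2)) (hβ : 8 ≤ β) (hη : 0 < η)
    (hD₂ : 0 < D₂) (hl : 0 < lam p) (hlC : 5 * Cs ≤ lam p) (hlD : D₁ < lam p)
    (hlow : ∀ i, -Cs ≤ lam i)
    (hD : ∀ i, D₁ < lam i → F i * lam i ≤ D₂)
    (hz : ∑ i, z i ^ 2 ≤ d ^ 2)
    (heq : ∀ i, T i / lam p = β * R i - A * z i)
    (hlin : ∀ w : Fin n → ℝ, w p = 0 → 0 ≤ ∑ i, F i * Lq i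
      - 4 * ∑ i, (F i - F p) * (w i * T i)
      + 2 * ∑ i, (F i - F p) * ((lam p - lam i) * w i ^ 2))
    (hineq : (∑ i, F i * Lq i) / lam p - ∑ i, F i * (T i / lam p) ^ 2 - β / η
      - β * ∑ i, F i * R i ^ 2 + A * ∑ i, F i ≤ 0) :
    A * (∑ i, F i) / 2 ≤ β / η + 4 * D₂ * (2 * β ^ 2 + β) / lam p * ∑ i, R i ^ 2 := by
  classical
  have hA0 : 0 < A := by rw [hA]; positivity
  have hAd : A * d ^ 2 = 1 / 4 := by rw [hA]; field_simp
  set K : Fin n → Prop := fun i => i ≠ p ∧ 4 * F p ≤ F i with hK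
  have h1 := hlin (fun i => if K i then T i / (6 / 5 * lam p) else 0) (by simp [hK])
  have h2 : ∀ i, -(4 * ((F i - F p) * ((if K i then T i / (6 / 5 * lam p) else 0) * T i)))
      + 2 * ((F i - F p) * ((lam p - lam i) * (if K i then T i / (6 / 5 * lam p) else 0) ^ 2))
      ≤ -(lam p * (if K i then 5 / 4 * (F i * (T i / lam p) ^ 2) else 0)) := by
    intro i
    by_cases hi : K i
    · simp only [hi, if_true]
      have hFp := hF p
      have h4 : 4 * F p ≤ F i := hi.2
      have h5 : 0 ≤ F i - F p := by linarith
      have h6 : lam p - lam i ≤ 6 / 5 * lam p := by linarith [hlow i]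
      set P := T i / lam p with hP
      have hT : T i = P * lam p := by rw [hP]; field_simp
      have hw : T i / (6 / 5 * lam p) = 5 / 6 * P := by rw [hP]; field_simp
      rw [hw, hT]
      have h7 : (F i - F p) * ((lam p - lam i) * (5 / 6 * P) ^ 2)
          ≤ (F i - F p) * ((6 / 5 * lam p) * (5 / 6 * P) ^ 2) := by gcongr
      have h8 : 0 ≤ (F i - 4 * F p) * (lam p * P ^ 2) :=
        mul_nonneg (by linarith) (by positivity)
      nlinarith
    · simp [hi]
  have h3 := Finset.sum_le_sum fun i (_ : i ∈ Finset.univ) => h2 i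
  simp only [Finset.sum_add_distrib, Finset.sum_neg_distrib, ← Finset.mul_sum] at h3
  have h4 : ∑ i, (if K i then 5 / 4 * (F i * (T i / lam p) ^ 2) else 0)
      ≤ (∑ i, F i * Lq i) / lam p := by
    rw [le_div_iff₀ hl]; linarith
  have hFp : F p ≤ D₂ / lam p := by
    rw [le_div_iff₀ hl]; exact hD p hlD
  have hterm : ∀ i, F i * (T i / lam p) ^ 2 + β * (F i * R i ^ 2)
      - (if K i then 5 / 4 * (F i * (T i / lam p) ^ 2) else 0) ≤
      2 * A ^ 2 * d ^ 2 * F i + 4 * D₂ * (2 * β ^ 2 + β) / lam p * R i ^ 2 := by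
    intro i
    have hFi := hF i
    have hz2 := sq_le_of_sum hz i
    have hz3 : A ^ 2 * z i ^ 2 ≤ A ^ 2 * d ^ 2 := by gcongr
    have hPe := heq i
    set P := T i / lam p with hP
    by_cases hi : K i
    · simp only [hi, if_true]
      have h5 : β * R i ^ 2 ≤ P ^ 2 / 4 + 2 * A ^ 2 * d ^ 2 := by
        have e1 : β * R i = P + A * z i := by linarith
        have e2 : β * (β * R i ^ 2) = (P + A * z i) ^ 2 := by rw [← e1]; ring
        have e3 : (P + A * z i) ^ 2 ≤ 2 * P ^ 2 + 2 * (A ^ 2 * d ^ 2) := by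
          nlinarith [sq_nonneg (P - A * z i)]
        have e4 : 8 * (β * R i ^ 2) ≤ β * (β * R i ^ 2) := by gcongr
        have : 0 ≤ A ^ 2 * d ^ 2 := by positivity
        nlinarith
      have h6 := mul_le_mul_of_nonneg_left h5 hFi.le
      have h7 : 0 ≤ 4 * D₂ * (2 * β ^ 2 + β) / lam p * R i ^ 2 := by positivity
      linarith
    · simp only [hi, if_false, sub_zero]
      have hFi4 : F i ≤ 4 * (D₂ / lam p) := by
        by_cases hip : i = p
        · subst hip; linarith
        · have : ¬ 4 * F p ≤ F i := fun h => hi ⟨hip, h⟩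
          push Not at this
          linarith
      have h5 : P ^ 2 ≤ 2 * β ^ 2 * R i ^ 2 + 2 * (A ^ 2 * d ^ 2) := by
        rw [hPe]; nlinarith [sq_nonneg (β * R i + A * z i)]
      have h6 := mul_le_mul_of_nonneg_left h5 hFi.le
      have h7 : F i * ((2 * β ^ 2 + β) * R i ^ 2)
          ≤ 4 * (D₂ / lam p) * ((2 * β ^ 2 + β) * R i ^ 2) := by gcongr
      have h8 : 4 * D₂ * (2 * β ^ 2 + β) / lam p * R i ^ 2
          = 4 * (D₂ / lam p) * ((2 * β ^ 2 + β) * R i ^ 2) := by field_simp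
      rw [h8]
      linarith
  have hs := Finset.sum_le_sum fun i (_ : i ∈ Finset.univ) => hterm i
  simp only [Finset.sum_add_distrib, Finset.sum_sub_distrib, ← Finset.mul_sum] at hs
  have h14 : 2 * A ^ 2 * d ^ 2 = A / 2 := by
    calc _ = 2 * A * (A * d ^ 2) := by ring
      _ = _ := by rw [hAd]; ring
  rw [h14] at hs
  linarith

end AlgEst

theorem rpow_bd {η C0 a : ℝ} (hη : 0 < η) (hC : η ≤ C0) (ha : 0 ≤ a) : η ^ a ≤ (C0 + 1) ^ a :=
  Real.rpow_le_rpow hη.le (by linarith) ha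

/-- final form of gradient bound: `(g η^α)² ≤ const` -/
theorem grad_fin {n : ℕ} {η C0 g A d α D₁ M N₂ S K1 : ℝ} (hα : α = N₂ + 1)
    (hN₂ : 0 < N₂) (hη : 0 < η) (hηC : η ≤ C0) (hA : 0 < A) (hD₁ : 0 < D₁)
    (hM : 0 < M) (hS : 0 < S) (hK1 : 0 < K1)
    (h : g ^ 2 ≤ n * (2 * A * d / α) ^ 2 * η ^ 2 ∨ g ^ 2 ≤ 2 * D₁ * η / α ∨
      (g ^ 2 ≤ 2 * η / α * (M * S ^ N₂) ∧ A * S / 2 ≤ K1 / η)) :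
    (η ^ α * g) ^ 2 ≤ (n * (2 * A * d / α) ^ 2 + 2 * D₁ / α + 2 / α * M * (2 * K1 / A) ^ N₂)
      * ((C0 + 1) ^ (2 * α + 2)) := by
  have hα0 : 0 < α := by linarith
  have hC1 : 1 ≤ C0 + 1 := by linarith
  have e0 : (η ^ α) ^ 2 = η ^ (2 * α) := by
    rw [← Real.rpow_natCast, ← Real.rpow_mul hη.le]; norm_num; ring_nf
  have hmono : ∀ a, 0 ≤ a → a ≤ 2 * α + 2 → η ^ a ≤ (C0 + 1) ^ (2 * α + 2) := fun a h0 h1 =>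
    (rpow_bd hη hηC h0).trans (Real.rpow_le_rpow_of_exponent_le hC1 h1)
  have hB : 0 < (C0 + 1) ^ (2 * α + 2) := by positivity
  set B := (C0 + 1) ^ (2 * α + 2) with hBdef
  have t1 : 0 ≤ (n * (2 * A * d / α) ^ 2 : ℝ) := by positivity
  have t2 : 0 ≤ 2 * D₁ / α := by positivity
  have t3 : 0 ≤ 2 / α * M * (2 * K1 / A) ^ N₂ := by positivity
  rw [mul_pow, e0]
  have hp : 0 < η ^ (2 * α) := by positivity
  rcases h with h | h | ⟨h, h'⟩
  · calc η ^ (2 * α) * g ^ 2 ≤ η ^ (2 * α) * (n * (2 * A * d / α) ^ 2 * η ^ 2) := by gcongr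
      _ = (n * (2 * A * d / α) ^ 2) * η ^ (2 * α + 2) := by
          rw [Real.rpow_add hη]; norm_num; ring
      _ ≤ (n * (2 * A * d / α) ^ 2) * B := by
          gcongr; exact hmono _ (by linarith) le_rfl
      _ ≤ _ := by gcongr; linarith
  · calc η ^ (2 * α) * g ^ 2 ≤ η ^ (2 * α) * (2 * D₁ * η / α) := by gcongr
      _ = (2 * D₁ / α) * η ^ (2 * α + 1) := by
          rw [Real.rpow_add hη, Real.rpow_one]; ring
      _ ≤ (2 * D₁ / α) * B := by
          gcongr; exact hmono _ (by linarith) (by linarith)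
      _ ≤ _ := by gcongr; linarith
  · have hS1 : S ≤ (2 * K1 / A) * η⁻¹ := by
      rw [← div_eq_mul_inv, le_div_iff₀ hη, le_div_iff₀ hA]
      rw [le_div_iff₀ hη] at h'
      linarith
    have hS2 : S ^ N₂ ≤ (2 * K1 / A) ^ N₂ * η ^ (-N₂) := by
      calc S ^ N₂ ≤ ((2 * K1 / A) * η⁻¹) ^ N₂ := Real.rpow_le_rpow hS.le hS1 hN₂.le
        _ = _ := by
          rw [Real.mul_rpow (by positivity) (by positivity), Real.inv_rpow hη.le, Real.rpow_neg hη.le]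
    calc η ^ (2 * α) * g ^ 2 ≤ η ^ (2 * α) * (2 * η / α * (M * S ^ N₂)) := by gcongr
      _ ≤ η ^ (2 * α) * (2 * η / α * (M * ((2 * K1 / A) ^ N₂ * η ^ (-N₂)))) := by gcongr
      _ = (2 / α * M * (2 * K1 / A) ^ N₂) * η ^ (2 * α + 1 + -N₂) := by
          rw [Real.rpow_add hη, Real.rpow_add hη, Real.rpow_one]; ring
      _ ≤ (2 / α * M * (2 * K1 / A) ^ N₂) * B := by
          gcongr; exact hmono _ (by linarith) (by linarith)
      _ ≤ _ := by gcongr; linarith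

theorem hess_fin {η C0 g A α β c0 Cs D₁ M N₂ S K2 l G1 : ℝ} (hα : 0 < α)
    (hβ : β = 10 + N₂ + 2 * α) (hc0 : 0 < c0) (hCs : 0 ≤ Cs) (hG1 : 0 ≤ G1)
    (hN₂ : 0 < N₂) (hη : 0 < η) (hηC : η ≤ C0) (hA : 0 < A) (hD₁ : 0 < D₁)
    (hM : 0 < M) (hS : c0 ≤ S) (hK2 : 0 < K2) (hl : 0 < l)
    (hgr : η ^ α * g ≤ G1) (hg : 0 ≤ g)
    (h : 5 * Cs ≤ l → D₁ < l → l ≤ M * S ^ N₂ ∧ A * S / 2 ≤ β / η + K2 / l * (g ^ 2 / η ^ 2)) :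
    η ^ β * l ≤ (5 * Cs + D₁ + M * (4 * β / A) ^ N₂ + 4 * K2 / (A * c0) * G1 ^ 2)
      * ((C0 + 1) ^ β) := by
  have hβ0 : 0 < β := by linarith
  have hS0 : 0 < S := by linarith
  have hC1 : 1 ≤ C0 + 1 := by linarith
  have hmono : ∀ a, 0 ≤ a → a ≤ β → η ^ a ≤ (C0 + 1) ^ β := fun a h0 h1 =>
    (rpow_bd hη hηC h0).trans (Real.rpow_le_rpow_of_exponent_le hC1 h1)
  have hB : 0 < (C0 + 1) ^ β := by positivity
  set B := (C0 + 1) ^ β with hBdef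
  have t2 : 0 ≤ M * (4 * β / A) ^ N₂ := by positivity
  have t3 : 0 ≤ 4 * K2 / (A * c0) * G1 ^ 2 := by positivity
  by_cases hcase : 5 * Cs ≤ l ∧ D₁ < l
  · obtain ⟨h1, h2⟩ := h hcase.1 hcase.2
    by_cases hc : A * S / 4 ≤ β / η
    · have hS1 : S ≤ (4 * β / A) * η⁻¹ := by
        rw [← div_eq_mul_inv, le_div_iff₀ hη, le_div_iff₀ hA]
        rw [le_div_iff₀ hη] at hc
        linarith
      have hS2 : S ^ N₂ ≤ (4 * β / A) ^ N₂ * η ^ (-N₂) := by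
        calc S ^ N₂ ≤ ((4 * β / A) * η⁻¹) ^ N₂ := Real.rpow_le_rpow hS0.le hS1 hN₂.le
          _ = _ := by
            rw [Real.mul_rpow (by positivity) (by positivity), Real.inv_rpow hη.le,
              Real.rpow_neg hη.le]
      calc η ^ β * l ≤ η ^ β * (M * ((4 * β / A) ^ N₂ * η ^ (-N₂))) := by
            gcongr; exact h1.trans (by gcongr)
        _ = M * (4 * β / A) ^ N₂ * η ^ (β + -N₂) := by rw [Real.rpow_add hη]; ring
        _ ≤ M * (4 * β / A) ^ N₂ * B := by
            gcongr; exact hmono _ (by linarith) (by linarith)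
        _ ≤ _ := by gcongr; linarith
    · push Not at hc
      have h3 : A * c0 / 4 ≤ K2 / l * (g ^ 2 / η ^ 2) := by
        have : A * c0 ≤ A * S := by gcongr
        linarith
      have h4 : l ≤ 4 * K2 / (A * c0) * (g ^ 2 / η ^ 2) := by
        rw [div_mul_eq_mul_div, le_div_iff₀ hl] at h3
        rw [div_mul_eq_mul_div, le_div_iff₀ (by positivity)]
        linarith
      have e1 : η ^ β = (η ^ α) ^ 2 * η ^ 2 * η ^ (β - 2 - 2 * α) := by
        rw [← Real.rpow_natCast, ← Real.rpow_natCast, ← Real.rpow_mul hη.le, ← Real.rpow_add hη,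
          ← Real.rpow_add hη]
        congr 1; push_cast; ring
      have h5 : (η ^ α * g) ^ 2 ≤ G1 ^ 2 := pow_le_pow_left₀ (by positivity) hgr 2
      calc η ^ β * l ≤ η ^ β * (4 * K2 / (A * c0) * (g ^ 2 / η ^ 2)) := by gcongr
        _ = 4 * K2 / (A * c0) * (η ^ α * g) ^ 2 * η ^ (β - 2 - 2 * α) := by
            rw [e1]; field_simp
        _ ≤ 4 * K2 / (A * c0) * G1 ^ 2 * B := by
            gcongr; exact hmono _ (by linarith) (by linarith)
        _ ≤ _ := by gcongr; linarith
  · have : l ≤ 5 * Cs + D₁ := by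
      by_contra hh
      push Not at hh
      exact hcase ⟨by linarith, by linarith⟩
    calc η ^ β * l ≤ B * (5 * Cs + D₁) := by
          gcongr; exact hmono _ hβ0.le le_rfl
      _ = (5 * Cs + D₁) * B := by ring
      _ ≤ _ := mul_le_mul_of_nonneg_right (by linarith) hB.le

section Est
variable {n : ℕ} {Ω : Set (EuclideanSpace ℝ (Fin n))} {u : EuclideanSpace ℝ (Fin n) → ℝ}
  {c0 D₁ D₂ M N₂ Cs : ℝ}

theorem J2.quad (y z v : EuclideanSpace ℝ (Fin n)) :
    J2 (fun t => ‖y + t • v - z‖ ^ 2) (‖y - z‖ ^ 2) (2 * inner ℝ (y - z) v) (2 * ‖v‖ ^ 2) := by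
  refine (J2.poly (‖y - z‖ ^ 2) (2 * inner ℝ (y - z) v) (‖v‖ ^ 2)).congr
    (Eventually.of_forall fun t => ?_)
  have : y + t • v - z = (y - z) + t • v := by abel
  simp only [this]
  rw [norm_add_sq_real, inner_smul_right, norm_smul, mul_pow, Real.norm_eq_abs, sq_abs]
  ring

theorem Good.dd2 {x : EuclideanSpace ℝ (Fin n)} {e F lam}
    (G : Good u Ω c0 D₁ D₂ M N₂ Cs x e F lam) (hΩ : IsOpen Ω)
    (hu : ContDiffOn ℝ (⊤ : ℕ∞) u Ω) (hx : x ∈ Ω) (i : Fin n) :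
    dd (e i) (dd (e i) u) x = lam i := by
  rw [dd_dd hΩ hu hx, G.hess]; simp

theorem neg_of_good (hΩ : IsOpen Ω) (hb : Bornology.IsBounded Ω)
    (hu : ContDiffOn ℝ (⊤ : ℕ∞) u Ω) (huc : ContinuousOn u (closure Ω))
    (h0 : ∀ x ∈ frontier Ω, u x = 0)
    (hG : ∀ x ∈ Ω, ∃ e F lam, Good u Ω c0 D₁ D₂ M N₂ Cs x e F lam) :
    ∀ x ∈ Ω, u x < 0 := by
  have key : ∀ y ∈ Ω, ¬ ∀ z ∈ Ω, u z ≤ u y := by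
    intro y hy hm
    obtain ⟨e, F, lam, G⟩ := hG y hy
    have h1 : ∀ i, lam i ≤ 0 := by
      intro i
      have := ((J2.line hΩ hu hy (e i)).localMax (by
        filter_upwards [line_mem hΩ hy (e i)] with t ht using hm _ ht)).2
      rwa [G.dd2 hΩ hu hy] at this
    have h2 : ∑ i, F i * lam i ≤ 0 := Finset.sum_nonpos fun i _ =>
      mul_nonpos_of_nonneg_of_nonpos (G.pos i).le (h1 i)
    rw [G.euler] at h2; linarith
  intro x hx
  by_contra hc
  push Not at hc
  have hK : IsCompact (closure Ω) := hb.isCompact_closure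
  obtain ⟨y, hy, hmax⟩ := hK.exists_isMaxOn ⟨x, subset_closure hx⟩ huc
  have hm : ∀ z ∈ Ω, u z ≤ u y := fun z hz => hmax (subset_closure hz)
  by_cases hyΩ : y ∈ Ω
  · exact key y hyΩ hm
  · have hf : y ∈ frontier Ω := by rw [hΩ.frontier_eq]; exact ⟨hy, hyΩ⟩
    rw [h0 y hf] at hm
    exact key x hx fun z hz => (hm z hz).trans hc

theorem dist_closure {d : ℝ} (hb : Bornology.IsBounded Ω) (hd : Metric.diam Ω ≤ d)
    {x y : EuclideanSpace ℝ (Fin n)} (hx : x ∈ closure Ω) (hy : y ∈ closure Ω) : ‖x - y‖ ≤ d := by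
  rw [← dist_eq_norm]
  refine (Metric.dist_le_diam_of_mem hb.closure hx hy).trans ?_
  rwa [Metric.diam_closure]

theorem C0_est {d : ℝ} (hc0 : 0 < c0) (hΩ : IsOpen Ω) (hb : Bornology.IsBounded Ω)
    (hd : Metric.diam Ω ≤ d)
    (hu : ContDiffOn ℝ (⊤ : ℕ∞) u Ω) (huc : ContinuousOn u (closure Ω))
    (h0 : ∀ x ∈ frontier Ω, u x = 0)
    (hG : ∀ x ∈ Ω, ∃ e F lam, Good u Ω c0 D₁ D₂ M N₂ Cs x e F lam) :
    ∀ x ∈ Ω, -u x ≤ d ^ 2 / c0 := by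
  intro x hx
  have hK : IsCompact (closure Ω) := hb.isCompact_closure
  have hcont : ContinuousOn (fun y => u y + (-(1 / c0)) * ‖y - x‖ ^ 2) (closure Ω) :=
    huc.add (by fun_prop)
  obtain ⟨y, hy, hmin⟩ := hK.exists_isMinOn ⟨x, subset_closure hx⟩ hcont
  have hm : ∀ z ∈ closure Ω, u y + (-(1 / c0)) * ‖y - x‖ ^ 2 ≤ u z + (-(1 / c0)) * ‖z - x‖ ^ 2 :=
    fun z hz => hmin hz
  by_cases hyΩ : y ∈ Ω
  · exfalso
    obtain ⟨e, F, lam, G⟩ := hG y hyΩ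
    have h1 : ∀ i, 2 / c0 ≤ lam i := by
      intro i
      have := (((J2.line hΩ hu hyΩ (e i)).add ((J2.quad y x (e i)).const_mul (-(1 / c0)))).localMin
        (by filter_upwards [line_mem hΩ hyΩ (e i)] with t ht using hm _ (subset_closure ht))).2
      rw [G.dd2 hΩ hu hyΩ, e.norm_eq_one] at this
      have h2 : 2 / c0 = 1 / c0 * (2 * 1 ^ 2) := by ring
      rw [h2]; linarith
    have h2 : ∑ i, F i * (2 / c0) ≤ ∑ i, F i * lam i := Finset.sum_le_sum fun i _ =>
      mul_le_mul_of_nonneg_left (h1 i) (G.pos i).le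
    rw [G.euler, ← Finset.sum_mul] at h2
    have h3 : c0 * (2 / c0) ≤ (∑ i, F i) * (2 / c0) := by gcongr; exact G.sum_ge
    have h4 : c0 * (2 / c0) = 2 := by field_simp
    linarith
  · have hf : y ∈ frontier Ω := by rw [hΩ.frontier_eq]; exact ⟨hy, hyΩ⟩
    have h1 := hm x (subset_closure hx)
    rw [h0 y hf] at h1
    simp only [sub_self, norm_zero] at h1
    have h2 := dist_closure hb hd hy (subset_closure hx)
    have h3 : ‖y - x‖ ^ 2 ≤ d ^ 2 := pow_le_pow_left₀ (norm_nonneg _) h2 2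
    have h4 : 1 / c0 * ‖y - x‖ ^ 2 ≤ 1 / c0 * d ^ 2 := by gcongr
    have h5 : d ^ 2 / c0 = 1 / c0 * d ^ 2 := by ring
    rw [h5]; linarith

theorem test_max (hΩ : IsOpen Ω) (hu : ContDiffOn ℝ (⊤ : ℕ∞) u Ω)
    {a : EuclideanSpace ℝ (Fin n) → ℝ} (ha : ContDiffOn ℝ (⊤ : ℕ∞) a Ω)
    {x z : EuclideanSpace ℝ (Fin n)} (hx : x ∈ Ω) {ε α A : ℝ} (hax : 0 < a x)
    (hη : 0 < -u x - ε)
    (hm : ∀ y ∈ Ω, 0 < -u y - ε → (-u y - ε) ^ α * a y * Real.exp (A / 2 * ‖y - z‖ ^ 2) ≤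
      (-u x - ε) ^ α * a x * Real.exp (A / 2 * ‖x - z‖ ^ 2))
    (v : EuclideanSpace ℝ (Fin n)) (hv : ‖v‖ = 1) :
    dd v a x / a x - α * (dd v u x / (-u x - ε)) + A * inner ℝ (x - z) v = 0 ∧
    (dd v (dd v a) x / a x - (dd v a x / a x) ^ 2) - α * (dd v (dd v u) x / (-u x - ε))
      - α * (dd v u x / (-u x - ε)) ^ 2 + A ≤ 0 := by
  have Ja := J2.line hΩ ha hx v
  have Ju := J2.line hΩ hu hx v
  have Jη : J2 (fun t => -u (x + t • v) - ε) (-u x - ε) (-dd v u x) (-dd v (dd v u) x) :=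
    (((Ju.const_mul (-1)).add (J2.const (-ε))).congr
      (Eventually.of_forall fun t => by ring)).cast (by ring) (by ring) (by ring)
  have J := ((Ja.log hax).add ((Jη.log hη).const_mul α)).add ((J2.quad x z v).const_mul (A / 2))
  have hc : ContinuousAt (fun t : ℝ => x + t • v) 0 := by fun_prop
  have hlog : ∀ y, 0 < a y → 0 < -u y - ε →
      Real.log ((-u y - ε) ^ α * a y * Real.exp (A / 2 * ‖y - z‖ ^ 2)) =
      Real.log (a y) + α * Real.log (-u y - ε) + A / 2 * ‖y - z‖ ^ 2 := by
    intro y h1 h2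
    have : 0 < (-u y - ε) ^ α := Real.rpow_pos_of_pos h2 _
    rw [Real.log_mul (by positivity) (by positivity), Real.log_mul this.ne' h1.ne',
      Real.log_exp, Real.log_rpow h2]
    ring
  have hpa : ∀ᶠ y in 𝓝 x, 0 < a y :=
    (smooth_diff hΩ ha hx).continuousAt.eventually (lt_mem_nhds hax)
  have hpη : ∀ᶠ y in 𝓝 x, 0 < -u y - ε := by
    have : ContinuousAt (fun y => -u y - ε) x :=
      (smooth_diff hΩ hu hx).continuousAt.neg.sub continuousAt_const
    exact this.eventually (lt_mem_nhds hη)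
  have hev : ∀ᶠ y in 𝓝 x, Real.log (a y) + α * Real.log (-u y - ε) + A / 2 * ‖y - z‖ ^ 2 ≤
      Real.log (a x) + α * Real.log (-u x - ε) + A / 2 * ‖x - z‖ ^ 2 := by
    filter_upwards [hpa, hpη, hΩ.mem_nhds hx] with y h1 h2 h3
    rw [← hlog y h1 h2, ← hlog x hax hη]
    have : 0 < (-u y - ε) ^ α := Real.rpow_pos_of_pos h2 _
    exact Real.log_le_log (by positivity) (hm y h3 h2)
  have hev2 : ∀ᶠ t in 𝓝 (0 : ℝ), (Real.log (a (x + t • v)) + α * Real.log (-u (x + t • v) - ε)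
      + A / 2 * ‖x + t • v - z‖ ^ 2) ≤
      Real.log (a x) + α * Real.log (-u x - ε) + A / 2 * ‖x - z‖ ^ 2 :=
    hc.eventually (by simpa using hev)
  obtain ⟨h1, h2⟩ := J.localMax hev2
  rw [hv] at h2
  constructor
  · rw [← h1]; ring
  · refine le_trans (le_of_eq ?_) h2
    simp only [div_pow]
    ring

theorem exists_max {a : EuclideanSpace ℝ (Fin n) → EuclideanSpace ℝ (Fin n) → ℝ}
    (hΩ : IsOpen Ω) (hb : Bornology.IsBounded Ω)
    (huc : ContinuousOn u (closure Ω)) (h0 : ∀ x ∈ frontier Ω, u x = 0)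
    (hac : ContinuousOn (fun q : EuclideanSpace ℝ (Fin n) × EuclideanSpace ℝ (Fin n) => a q.1 q.2)
      (Ω ×ˢ Set.univ))
    {ε α A : ℝ} (hε : 0 < ε) (hα : 0 < α) {x v : EuclideanSpace ℝ (Fin n)} (hx : x ∈ Ω)
    (hv : ‖v‖ = 1) (hη : 0 < -u x - ε) (ha : 0 < a x v) :
    ∃ y ∈ Ω, ∃ w, ‖w‖ = 1 ∧ 0 < -u y - ε ∧ 0 < a y w ∧
      ∀ y' ∈ Ω, ∀ w', ‖w'‖ = 1 → 0 < -u y' - ε →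
        (-u y' - ε) ^ α * a y' w' * Real.exp (A / 2 * ‖y' - x‖ ^ 2) ≤
        (-u y - ε) ^ α * a y w * Real.exp (A / 2 * ‖y - x‖ ^ 2) := by
  set K := closure Ω ∩ u ⁻¹' Set.Iic (-ε) with hKdef
  have hKc : IsCompact K :=
    hb.isCompact_closure.of_isClosed_subset
      (huc.preimage_isClosed_of_isClosed isClosed_closure isClosed_Iic) Set.inter_subset_left
  have hKΩ : K ⊆ Ω := by
    rintro y ⟨hy, hy2⟩
    by_contra hc
    have hf : y ∈ frontier Ω := by rw [hΩ.frontier_eq]; exact ⟨hy, hc⟩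
    have h2 : u y ≤ -ε := hy2
    rw [h0 y hf] at h2; linarith
  have hS : IsCompact (K ×ˢ Metric.sphere (0 : EuclideanSpace ℝ (Fin n)) 1) :=
    hKc.prod (isCompact_sphere _ _)
  have hxK : ∀ y ∈ Ω, 0 < -u y - ε → y ∈ K := fun y hy h =>
    ⟨subset_closure hy, show u y ≤ -ε by linarith⟩
  have hcont : ContinuousOn (fun q : EuclideanSpace ℝ (Fin n) × EuclideanSpace ℝ (Fin n) =>
      (-u q.1 - ε) ^ α * a q.1 q.2 * Real.exp (A / 2 * ‖q.1 - x‖ ^ 2))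
      (K ×ˢ Metric.sphere (0 : EuclideanSpace ℝ (Fin n)) 1) := by
    have h1 : ContinuousOn (fun q : EuclideanSpace ℝ (Fin n) × EuclideanSpace ℝ (Fin n) => u q.1)
        (K ×ˢ Metric.sphere (0 : EuclideanSpace ℝ (Fin n)) 1) :=
      huc.comp continuousOn_fst fun q hq => hq.1.1
    have h2 := hac.mono (s := Ω ×ˢ Set.univ)
      (t := K ×ˢ Metric.sphere (0 : EuclideanSpace ℝ (Fin n)) 1)
      (fun q hq => ⟨hKΩ hq.1, trivial⟩)
    refine ((ContinuousOn.rpow_const (h1.neg.sub continuousOn_const) ?_).mul h2).mul ?_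
    · intro q _; right; exact hα.le
    · fun_prop
  obtain ⟨⟨y, w⟩, hyw, hmax⟩ := hS.exists_isMaxOn
    ⟨(x, v), hxK x hx hη, by simpa using hv⟩ hcont
  have hm : ∀ y' ∈ Ω, ∀ w', ‖w'‖ = 1 → 0 < -u y' - ε →
        (-u y' - ε) ^ α * a y' w' * Real.exp (A / 2 * ‖y' - x‖ ^ 2) ≤
        (-u y - ε) ^ α * a y w * Real.exp (A / 2 * ‖y - x‖ ^ 2) := fun y' hy' w' hw' h =>
    hmax (show (y', w') ∈ _ from ⟨hxK y' hy' h, by simpa using hw'⟩)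
  have hpos := hm x hx v hv hη
  have hp1 : 0 < (-u x - ε) ^ α := Real.rpow_pos_of_pos hη _
  have hp2 : 0 < (-u y - ε) ^ α * a y w * Real.exp (A / 2 * ‖y - x‖ ^ 2) :=
    lt_of_lt_of_le (by positivity) hpos
  have hyη : 0 ≤ -u y - ε := by
    have : u y ≤ -ε := hyw.1.2
    linarith
  have hp3 : 0 < (-u y - ε) ^ α * a y w := by
    by_contra h
    have := mul_nonpos_of_nonpos_of_nonneg (not_lt.1 h) (Real.exp_pos (A / 2 * ‖y - x‖ ^ 2)).le
    linarith
  have hp4 : 0 < -u y - ε := by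
    rcases hyη.lt_or_eq with h | h
    · exact h
    · rw [← h, Real.zero_rpow hα.ne'] at hp3; simp at hp3
  exact ⟨y, hKΩ hyw.1, w, by simpa using hyw.2, hp4,
    (pos_iff_pos_of_mul_pos hp3).1 (Real.rpow_pos_of_pos hp4 _), hm⟩

end Est

section Est2
variable {n : ℕ} {Ω : Set (EuclideanSpace ℝ (Fin n))} {u : EuclideanSpace ℝ (Fin n) → ℝ}
  {c0 D₁ D₂ M N₂ Cs : ℝ}

theorem inner_gradient' (g : EuclideanSpace ℝ (Fin n) → ℝ) (y v : EuclideanSpace ℝ (Fin n)) :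
    inner ℝ (gradient g y) v = dd v g y := by
  simp [gradient, dd]

theorem sum_z (e : OrthonormalBasis (Fin n) ℝ (EuclideanSpace ℝ (Fin n)))
    (x : EuclideanSpace ℝ (Fin n)) : ∑ i, (inner ℝ x (e i)) ^ 2 = ‖x‖ ^ 2 := by
  have := e.sum_sq_norm_inner_left x
  simpa using this

def GradC (n : ℕ) (c0 D₁ D₂ M N₂ d : ℝ) : ℝ :=
  Real.exp (1 / (28 * d ^ 2) / 2 * d ^ 2) * Real.sqrt
    ((n * (2 * (1 / (28 * d ^ 2)) * d / (N₂ + 1)) ^ 2 + 2 * D₁ / (N₂ + 1) + 2 / (N₂ + 1) * M *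
      (2 * ((N₂ + 1) + (2 * (N₂ + 1) ^ 2 + (N₂ + 1)) * (2 * D₂ / (N₂ + 1))) / (1 / (28 * d ^ 2))) ^ N₂)
      * ((d ^ 2 / c0 + 1) ^ (2 * (N₂ + 1) + 2)))

theorem grad_est {d : ℝ} (hc0 : 0 < c0) (hd0 : 0 < d) (hN₂ : 0 < N₂) (hD₁ : 0 < D₁)
    (hD₂ : 0 < D₂) (hM : 0 < M) (hΩ : IsOpen Ω) (hb : Bornology.IsBounded Ω)
    (hd : Metric.diam Ω ≤ d)
    (hu : ContDiffOn ℝ (⊤ : ℕ∞) u Ω) (huc : ContinuousOn u (closure Ω))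
    (h0 : ∀ x ∈ frontier Ω, u x = 0)
    (hG : ∀ x ∈ Ω, ∃ e F lam, Good u Ω c0 D₁ D₂ M N₂ Cs x e F lam)
    {ε : ℝ} (hε : 0 < ε) {x : EuclideanSpace ℝ (Fin n)} (hx : x ∈ Ω) (hη : 0 < -u x - ε) :
    (-u x - ε) ^ (N₂ + 1) * ‖gradient u x‖ ≤ GradC n c0 D₁ D₂ M N₂ d := by
  set α := N₂ + 1 with hα
  set A := 1 / (28 * d ^ 2) with hA
  have hA0 : 0 < A := by positivity
  have hα0 : 0 < α := by linarith
  set Q := (n * (2 * A * d / α) ^ 2 + 2 * D₁ / α + 2 / α * M *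
      (2 * (α + (2 * α ^ 2 + α) * (2 * D₂ / α)) / A) ^ N₂)
      * ((d ^ 2 / c0 + 1) ^ (2 * α + 2)) with hQ
  have hgoal : GradC n c0 D₁ D₂ M N₂ d = Real.exp (A / 2 * d ^ 2) * Real.sqrt Q := rfl
  rw [hgoal]
  rcases (norm_nonneg (gradient u x)).eq_or_lt with hz | hgx
  · rw [← hz, mul_zero]; positivity
  have hgn : ∀ y, 0 < ‖gradient u y‖ → ‖(‖gradient u y‖⁻¹ • gradient u y)‖ = 1 := by
    intro y hy
    rw [norm_smul, norm_inv, norm_norm, inv_mul_cancel₀ hy.ne']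
  have hgd : ∀ y, 0 < ‖gradient u y‖ →
      dd (‖gradient u y‖⁻¹ • gradient u y) u y = ‖gradient u y‖ := by
    intro y hy
    rw [← inner_gradient', inner_smul_right, real_inner_self_eq_norm_sq]
    field_simp
  have hac : ContinuousOn (fun q : EuclideanSpace ℝ (Fin n) × EuclideanSpace ℝ (Fin n) =>
      dd q.2 u q.1) (Ω ×ˢ Set.univ) := by
    have h1 : ContinuousOn (fderiv ℝ u) Ω :=
      (hu.fderiv_of_isOpen (m := (⊤ : ℕ∞)) hΩ (by simp)).continuousOn
    have h2 : ContinuousOn (fun q : EuclideanSpace ℝ (Fin n) × EuclideanSpace ℝ (Fin n) =>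
      fderiv ℝ u q.1) (Ω ×ˢ Set.univ) := h1.comp continuousOn_fst fun q hq => hq.1
    exact h2.clm_apply continuousOn_snd
  obtain ⟨y, hy, w, hw, hηy, hay, hmax⟩ := exists_max (a := fun y w => dd w u y) (A := A)
    hΩ hb huc h0 hac hε hα0 hx (hgn x hgx) hη (by rw [hgd x hgx]; exact hgx)
  set g := ‖gradient u y‖ with hgdef
  have hwg : dd w u y ≤ g := by
    rw [← inner_gradient']
    refine (real_inner_le_norm _ _).trans ?_
    rw [hw, mul_one]
  have hg : 0 < g := lt_of_lt_of_le hay hwg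
  set w' := g⁻¹ • gradient u y with hw'
  have hw'1 : ‖w'‖ = 1 := hgn y hg
  have hw'g : dd w' u y = g := hgd y hg
  have hηp : 0 < (-u y - ε) ^ α := Real.rpow_pos_of_pos hηy _
  have hmax' : ∀ y' ∈ Ω, ∀ w'', ‖w''‖ = 1 → 0 < -u y' - ε →
        (-u y' - ε) ^ α * dd w'' u y' * Real.exp (A / 2 * ‖y' - x‖ ^ 2) ≤
        (-u y - ε) ^ α * g * Real.exp (A / 2 * ‖y - x‖ ^ 2) := by
    intro y' h1 w'' h2 h3
    refine (hmax y' h1 w'' h2 h3).trans ?_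
    gcongr
  obtain ⟨e, F, lam, G⟩ := hG y hy
  have hT := fun i => test_max (a := dd w' u) (z := x) (ε := ε) (α := α) (A := A) hΩ hu
    (dd_smooth hΩ hu w') hy (by rw [hw'g]; exact hg) hηy
    (by rw [hw'g]; exact fun y' h1 h2 => hmax' y' h1 w' hw'1 h2) (e i) (e.norm_eq_one i)
  set η := -u y - ε with hηdef
  have hnyx : ‖y - x‖ ≤ d := dist_closure hb hd (subset_closure hy) (subset_closure hx)
  have hnyx2 : ‖y - x‖ ^ 2 ≤ d ^ 2 := pow_le_pow_left₀ (norm_nonneg _) hnyx 2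
  have hdw : ∀ i, dd (e i) (dd w' u) y = lam i * (dd (e i) u y) / g := by
    intro i
    rw [dd_dd hΩ hu hy, G.hess, hw', inner_smul_right, real_inner_comm, inner_gradient']
    ring
  have hcore := grad_alg F lam (fun i => dd (e i) u y / η) (fun i => inner ℝ (y - x) (e i))
    (η := η) (g := g) (d := d) (A := A) (α := α) (D₁ := D₁) (D₂ := D₂) (M := M) (N₂ := N₂)
    G.pos hd0 hA (by linarith) hηy hg hD₂ G.condD G.big
    (by rw [sum_z]; exact hnyx2)
    (by
      have : ∀ i, η * (dd (e i) u y / η) = inner ℝ (gradient u y) (e i) := by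
        intro i; rw [inner_gradient']; field_simp
      simp only [this]; rw [sum_z])
    (by
      intro i
      have h1 := (hT i).1
      rw [hdw, hw'g] at h1
      have h2 : lam i * (η * (dd (e i) u y / η)) / g ^ 2 = lam i * dd (e i) u y / g / g := by
        field_simp
      rw [h2]; linarith)
    (by
      have h1 : ∀ i, F i * (dd (e i) (dd (e i) (dd w' u)) y) / g
          - F i * (α * (dd (e i) u y / η) - A * inner ℝ (y - x) (e i)) ^ 2
          - α / η * (F i * lam i) - α * (F i * (dd (e i) u y / η) ^ 2) + A * F i ≤ 0 := by
        intro i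
        obtain ⟨h2, h3⟩ := hT i
        have h4 : α * (dd (e i) u y / η) - A * inner ℝ (y - x) (e i)
          = dd (e i) (dd w' u) y / dd w' u y := by linarith
        rw [h4]
        rw [G.dd2 hΩ hu hy i] at h3
        have h5 := mul_nonpos_of_nonneg_of_nonpos (G.pos i).le h3
        refine le_trans (le_of_eq ?_) h5
        rw [hw'g]; ring
      have h2 := Finset.sum_nonpos fun i (_ : i ∈ Finset.univ) => h1 i
      simp only [Finset.sum_add_distrib, Finset.sum_sub_distrib, ← Finset.mul_sum,
        ← Finset.sum_div] at h2
      rw [G.lin1 hΩ hu hy w', G.euler, zero_div] at h2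
      linarith)
  have hC0 := C0_est hc0 hΩ hb hd hu huc h0 hG y hy
  have hS : 0 < ∑ i, F i := lt_of_lt_of_le hc0 G.sum_ge
  have hfin := grad_fin (n := n) (η := η) (C0 := d ^ 2 / c0) hα hN₂ hηy (by linarith) hA0 hD₁ hM hS
    (by positivity) hcore
  have h1 : η ^ α * g ≤ Real.sqrt Q := Real.le_sqrt_of_sq_le hfin
  have h2 := hmax' x hx _ (hgn x hgx) hη
  rw [hgd x hgx, sub_self] at h2
  simp only [norm_zero, ne_eq, OfNat.ofNat_ne_zero, not_false_eq_true, zero_pow, mul_zero,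
    Real.exp_zero, mul_one] at h2
  refine h2.trans ?_
  rw [mul_comm (Real.exp _)]
  gcongr

def HessC (c0 D₁ D₂ M N₂ Cs G1 d : ℝ) : ℝ :=
  Real.exp (1 / (4 * d ^ 2) / 2 * d ^ 2) *
    ((5 * Cs + D₁ + M * (4 * (10 + N₂ + 2 * (N₂ + 1)) / (1 / (4 * d ^ 2))) ^ N₂ +
      4 * (4 * D₂ * (2 * (10 + N₂ + 2 * (N₂ + 1)) ^ 2 + (10 + N₂ + 2 * (N₂ + 1))))
        / ((1 / (4 * d ^ 2)) * c0) * G1 ^ 2)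
      * ((d ^ 2 / c0 + 1) ^ (10 + N₂ + 2 * (N₂ + 1))))

theorem hess_est {d : ℝ} (hn : 0 < n) (hc0 : 0 < c0) (hd0 : 0 < d) (hN₂ : 0 < N₂) (hD₁ : 0 < D₁)
    (hD₂ : 0 < D₂) (hM : 0 < M) (hCs : 0 ≤ Cs) (hΩ : IsOpen Ω) (hb : Bornology.IsBounded Ω)
    (hd : Metric.diam Ω ≤ d)
    (hu : ContDiffOn ℝ (⊤ : ℕ∞) u Ω) (huc : ContinuousOn u (closure Ω))
    (h0 : ∀ x ∈ frontier Ω, u x = 0)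
    (hG : ∀ x ∈ Ω, ∃ e F lam, Good u Ω c0 D₁ D₂ M N₂ Cs x e F lam)
    {ε : ℝ} (hε : 0 < ε) {x : EuclideanSpace ℝ (Fin n)} (hx : x ∈ Ω) (hη : 0 < -u x - ε)
    (v : EuclideanSpace ℝ (Fin n)) (hv : ‖v‖ = 1) :
    (-u x - ε) ^ (10 + N₂ + 2 * (N₂ + 1)) * dd v (dd v u) x ≤
      HessC c0 D₁ D₂ M N₂ Cs (GradC n c0 D₁ D₂ M N₂ d) d := by
  set α := N₂ + 1 with hα
  set β := 10 + N₂ + 2 * α with hβ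
  set A := 1 / (4 * d ^ 2) with hA
  have hA0 : 0 < A := by positivity
  have hα0 : 0 < α := by linarith
  have hβ0 : 0 < β := by linarith
  have hG1 : 0 ≤ GradC n c0 D₁ D₂ M N₂ d := by unfold GradC; positivity
  set G1 := GradC n c0 D₁ D₂ M N₂ d with hG1def
  set Q := (5 * Cs + D₁ + M * (4 * β / A) ^ N₂ + 4 * (4 * D₂ * (2 * β ^ 2 + β)) / (A * c0) * G1 ^ 2)
      * ((d ^ 2 / c0 + 1) ^ β) with hQ
  have hQ0 : 0 ≤ Q := by positivity
  have hgoal : HessC c0 D₁ D₂ M N₂ Cs G1 d = Real.exp (A / 2 * d ^ 2) * Q := rfl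
  rw [hgoal]
  have hηx : 0 < (-u x - ε) ^ β := Real.rpow_pos_of_pos hη _
  rcases le_or_gt (dd v (dd v u) x) 0 with hz | hax
  · have := mul_nonpos_of_nonneg_of_nonpos hηx.le hz
    exact this.trans (by positivity)
  have hac : ContinuousOn (fun q : EuclideanSpace ℝ (Fin n) × EuclideanSpace ℝ (Fin n) =>
      dd q.2 (dd q.2 u) q.1) (Ω ×ˢ Set.univ) := by
    have h1 : ContinuousOn (fderiv ℝ (fderiv ℝ u)) Ω :=
      ((hu.fderiv_of_isOpen (m := (⊤ : ℕ∞)) hΩ (by simp)).fderiv_of_isOpen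
        (m := (⊤ : ℕ∞)) hΩ (by simp)).continuousOn
    have h2 : ContinuousOn (fun q : EuclideanSpace ℝ (Fin n) × EuclideanSpace ℝ (Fin n) =>
      fderiv ℝ (fderiv ℝ u) q.1) (Ω ×ˢ Set.univ) := h1.comp continuousOn_fst fun q hq => hq.1
    have h3 := (h2.clm_apply continuousOn_snd).clm_apply continuousOn_snd
    refine h3.congr ?_
    intro q hq
    exact dd_dd hΩ hu hq.1 q.2 q.2
  obtain ⟨y, hy, w, hw, hηy, hay, hmax⟩ := exists_max (a := fun y w => dd w (dd w u) y) (A := A)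
    hΩ hb huc h0 hac hε hβ0 hx hv hη hax
  obtain ⟨e, F, lam, G⟩ := hG y hy
  have : Nonempty (Fin n) := ⟨⟨0, hn⟩⟩
  obtain ⟨p, hp⟩ := Finite.exists_max lam
  have hwl : dd w (dd w u) y ≤ lam p := by
    rw [dd_dd hΩ hu hy, H2_quad G.hess]
    calc ∑ j, lam j * (inner ℝ (e j) w * inner ℝ (e j) w)
        ≤ ∑ j, lam p * (inner ℝ w (e j)) ^ 2 := by
          refine Finset.sum_le_sum fun j _ => ?_
          rw [real_inner_comm, ← sq]
          exact mul_le_mul_of_nonneg_right (hp j) (sq_nonneg _)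
      _ = lam p := by rw [← Finset.mul_sum, sum_z, hw]; ring
  have hl : 0 < lam p := lt_of_lt_of_le hay hwl
  have hap : dd (e p) (dd (e p) u) y = lam p := G.dd2 hΩ hu hy p
  have hηp : 0 < (-u y - ε) ^ β := Real.rpow_pos_of_pos hηy _
  have hmax' : ∀ y' ∈ Ω, ∀ w'', ‖w''‖ = 1 → 0 < -u y' - ε →
        (-u y' - ε) ^ β * dd w'' (dd w'' u) y' * Real.exp (A / 2 * ‖y' - x‖ ^ 2) ≤
        (-u y - ε) ^ β * lam p * Real.exp (A / 2 * ‖y - x‖ ^ 2) := by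
    intro y' h1 w'' h2 h3
    refine (hmax y' h1 w'' h2 h3).trans ?_
    gcongr
  have hT := fun i => test_max (a := dd (e p) (dd (e p) u)) (z := x) (ε := ε) (α := β) (A := A)
    hΩ hu (dd_smooth hΩ (dd_smooth hΩ hu (e p)) (e p)) hy (by rw [hap]; exact hl) hηy
    (by rw [hap]; exact fun y' h1 h2 => hmax' y' h1 (e p) (e.norm_eq_one p) h2)
    (e i) (e.norm_eq_one i)
  have hgr := grad_est hc0 hd0 hN₂ hD₁ hD₂ hM hΩ hb hd hu huc h0 hG hε hy hηy
  set η := -u y - ε with hηdef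
  have hnyx : ‖y - x‖ ≤ d := dist_closure hb hd (subset_closure hy) (subset_closure hx)
  have hnyx2 : ‖y - x‖ ^ 2 ≤ d ^ 2 := pow_le_pow_left₀ (norm_nonneg _) hnyx 2
  have hR : ∑ i, (dd (e i) u y / η) ^ 2 = ‖gradient u y‖ ^ 2 / η ^ 2 := by
    rw [← sum_z e, Finset.sum_div]
    refine Finset.sum_congr rfl fun i _ => ?_
    rw [inner_gradient', div_pow]
  have hC0 := C0_est hc0 hΩ hb hd hu huc h0 hG y hy
  have hfin := hess_fin (η := η) (C0 := d ^ 2 / c0) (g := ‖gradient u y‖) (A := A) (α := α)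
    (β := β) (c0 := c0) (Cs := Cs) (D₁ := D₁) (M := M) (N₂ := N₂) (S := ∑ i, F i)
    (K2 := 4 * D₂ * (2 * β ^ 2 + β)) (l := lam p) (G1 := G1) hα0 hβ hc0 hCs hG1 hN₂ hηy
    (by linarith) hA0 hD₁ hM G.sum_ge (by positivity) hl hgr (norm_nonneg _)
    (by
      intro h5 hD
      refine ⟨G.big p hD, ?_⟩
      rw [← hR]
      refine hess_alg F lam (fun i => dd (e i) u y / η) (fun i => inner ℝ (y - x) (e i))
        (fun i => dd (e i) (dd (e p) (dd (e p) u)) y)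
        (fun i => dd (e i) (dd (e i) (dd (e p) (dd (e p) u))) y) p
        (η := η) (d := d) (A := A) (β := β) (D₁ := D₁) (D₂ := D₂) (Cs := Cs)
        G.pos hd0 hA (by linarith) hηy hD₂ hl h5 hD G.lower G.condD
        (by rw [sum_z]; exact hnyx2) ?_ ?_ ?_
      · intro i
        have h1 := (hT i).1
        rw [hap] at h1
        linarith
      · intro w hw
        exact G.lin2 hΩ hu hy p w hw
      · have h1 : ∀ i, F i * (dd (e i) (dd (e i) (dd (e p) (dd (e p) u))) y) / lam p
            - F i * (dd (e i) (dd (e p) (dd (e p) u)) y / lam p) ^ 2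
            - β / η * (F i * lam i) - β * (F i * (dd (e i) u y / η) ^ 2) + A * F i ≤ 0 := by
          intro i
          obtain ⟨h2, h3⟩ := hT i
          rw [G.dd2 hΩ hu hy i] at h3
          have h5 := mul_nonpos_of_nonneg_of_nonpos (G.pos i).le h3
          refine le_trans (le_of_eq ?_) h5
          rw [hap]; ring
        have h2 := Finset.sum_nonpos fun i (_ : i ∈ Finset.univ) => h1 i
        simp only [Finset.sum_add_distrib, Finset.sum_sub_distrib, ← Finset.mul_sum,
          ← Finset.sum_div] at h2
        rw [G.euler] at h2
        linarith)
  have h2 := hmax' x hx v hv hη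
  rw [sub_self] at h2
  simp only [norm_zero, ne_eq, OfNat.ofNat_ne_zero, not_false_eq_true, zero_pow, mul_zero,
    Real.exp_zero, mul_one] at h2
  refine h2.trans ?_
  rw [mul_comm (Real.exp _)]
  gcongr

theorem eps_lim {U X C a : ℝ} (hU : 0 < U) (ha : 0 < a)
    (h : ∀ ε, 0 < ε → 0 < U - ε → (U - ε) ^ a * X ≤ C) : U ^ a * X ≤ C := by
  have hc : ContinuousAt (fun ε : ℝ => (U - ε) ^ a * X) 0 := by
    refine ContinuousAt.mul (ContinuousAt.rpow_const (by fun_prop) (Or.inr ha.le)) continuousAt_const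
  have h1 : Tendsto (fun ε : ℝ => (U - ε) ^ a * X) (𝓝[>] 0) (𝓝 (U ^ a * X)) := by
    have := hc.tendsto
    simp only [sub_zero] at this
    exact this.mono_left nhdsWithin_le_nhds
  refine le_of_tendsto h1 ?_
  filter_upwards [Ioo_mem_nhdsGT hU] with ε hε
  exact h ε hε.1 (by linarith [hε.2])

theorem norm_H2_le {x : EuclideanSpace ℝ (Fin n)} {e F lam}
    (G : Good u Ω c0 D₁ D₂ M N₂ Cs x e F lam) {Λ : ℝ} (hΛ : 0 ≤ Λ) (h1 : ∀ i, |lam i| ≤ Λ) :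
    ‖iteratedFDeriv ℝ 2 u x‖ ≤ Λ := by
  refine ContinuousMultilinearMap.opNorm_le_bound hΛ fun m => ?_
  rw [iteratedFDeriv_two_apply]
  have h2 : fderiv ℝ (fderiv ℝ u) x (m 0) (m 1) = _ := H2_quad G.hess (m 0) (m 1)
  rw [h2, Fin.prod_univ_two, Real.norm_eq_abs]
  calc |∑ j, lam j * (inner ℝ (e j) (m 0) * inner ℝ (e j) (m 1))|
      ≤ ∑ j, |lam j * (inner ℝ (e j) (m 0) * inner ℝ (e j) (m 1))| :=
        Finset.abs_sum_le_sum_abs _ _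
    _ ≤ ∑ j, Λ * (|inner ℝ (m 0) (e j)| * |inner ℝ (m 1) (e j)|) := by
        refine Finset.sum_le_sum fun j _ => ?_
        rw [abs_mul, abs_mul, real_inner_comm, real_inner_comm (m 1)]
        exact mul_le_mul_of_nonneg_right (h1 j) (by positivity)
    _ = Λ * ∑ j, |inner ℝ (m 0) (e j)| * |inner ℝ (m 1) (e j)| := by rw [Finset.mul_sum]
    _ ≤ Λ * (Real.sqrt (∑ j, |inner ℝ (m 0) (e j)| ^ 2) *
          Real.sqrt (∑ j, |inner ℝ (m 1) (e j)| ^ 2)) := by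
        gcongr
        exact Real.sum_mul_le_sqrt_mul_sqrt _ _ _
    _ = Λ * (‖m 0‖ * ‖m 1‖) := by
        simp only [sq_abs]
        rw [sum_z, sum_z, Real.sqrt_sq (norm_nonneg _), Real.sqrt_sq (norm_nonneg _)]

theorem final_est {d : ℝ} (hn : 0 < n) (hc0 : 0 < c0) (hd0 : 0 < d) (hN₂ : 0 < N₂) (hD₁ : 0 < D₁)
    (hD₂ : 0 < D₂) (hM : 0 < M) (hCs : 0 ≤ Cs) (hΩ : IsOpen Ω) (hb : Bornology.IsBounded Ω)
    (hd : Metric.diam Ω ≤ d)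
    (hu : ContDiffOn ℝ (⊤ : ℕ∞) u Ω) (huc : ContinuousOn u (closure Ω))
    (h0 : ∀ x ∈ frontier Ω, u x = 0)
    (hG : ∀ x ∈ Ω, ∃ e F lam, Good u Ω c0 D₁ D₂ M N₂ Cs x e F lam)
    {x : EuclideanSpace ℝ (Fin n)} (hx : x ∈ Ω) :
    (-u x) + (-u x) ^ (N₂ + 1) * ‖gradient u x‖
      + (-u x) ^ (10 + N₂ + 2 * (N₂ + 1)) * ‖iteratedFDeriv ℝ 2 u x‖ ≤
    d ^ 2 / c0 + GradC n c0 D₁ D₂ M N₂ d +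
      (HessC c0 D₁ D₂ M N₂ Cs (GradC n c0 D₁ D₂ M N₂ d) d
        + (d ^ 2 / c0 + 1) ^ (10 + N₂ + 2 * (N₂ + 1)) * Cs) := by
  have hneg : 0 < -u x := by linarith [neg_of_good hΩ hb hu huc h0 hG x hx]
  have e1 := C0_est hc0 hΩ hb hd hu huc h0 hG x hx
  have e2 : (-u x) ^ (N₂ + 1) * ‖gradient u x‖ ≤ GradC n c0 D₁ D₂ M N₂ d :=
    eps_lim hneg (by linarith) fun ε h1 h2 =>
      grad_est hc0 hd0 hN₂ hD₁ hD₂ hM hΩ hb hd hu huc h0 hG h1 hx h2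
  set β := 10 + N₂ + 2 * (N₂ + 1) with hβ
  have hβ0 : 0 < β := by linarith
  have e3 : ∀ v : EuclideanSpace ℝ (Fin n), ‖v‖ = 1 → (-u x) ^ β * dd v (dd v u) x ≤
      HessC c0 D₁ D₂ M N₂ Cs (GradC n c0 D₁ D₂ M N₂ d) d := fun v hv =>
    eps_lim hneg hβ0 fun ε h1 h2 =>
      hess_est hn hc0 hd0 hN₂ hD₁ hD₂ hM hCs hΩ hb hd hu huc h0 hG h1 hx h2 v hv
  obtain ⟨e, F, lam, G⟩ := hG x hx
  have hp : 0 < (-u x) ^ β := Real.rpow_pos_of_pos hneg _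
  have hH0 : 0 ≤ HessC c0 D₁ D₂ M N₂ Cs (GradC n c0 D₁ D₂ M N₂ d) d := by
    unfold HessC; positivity
  set H := HessC c0 D₁ D₂ M N₂ Cs (GradC n c0 D₁ D₂ M N₂ d) d
  have e4 : ∀ i, |lam i| ≤ H / (-u x) ^ β + Cs := by
    intro i
    have h1 := e3 (e i) (e.norm_eq_one i)
    rw [G.dd2 hΩ hu hx, mul_comm, ← le_div_iff₀ hp] at h1
    have h2 := G.lower i
    have h3 : 0 ≤ H / (-u x) ^ β := by positivity
    rw [abs_le]
    constructor <;> linarith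
  have e5 := norm_H2_le G (by positivity) e4
  have e6 : (-u x) ^ β * ‖iteratedFDeriv ℝ 2 u x‖ ≤ H + (d ^ 2 / c0 + 1) ^ β * Cs := by
    calc _ ≤ (-u x) ^ β * (H / (-u x) ^ β + Cs) := by gcongr
      _ = H + (-u x) ^ β * Cs := by field_simp
      _ ≤ _ := by
        have := rpow_bd hneg e1 hβ0.le
        gcongr
  linarith

end Est2

end HelperLemmas

/-- **Theorem (main estimate).** For a concave elliptic Hessian operator `f` on a convex
invariant cone `Γ` satisfying condition N, and any solution `u` of the Dirichlet problem
`F(D²u) = 1` in `Ω`, `u = 0` on `∂Ω`, satisfying condition D, one has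
`sup_Ω ((−u) + (−u)^α |Du| + (−u)^β |D²u|) ≤ C` with `α, β, C` depending only on
`f`, `N₁`, `N₂`, `D₁`, `D₂` and `diam(Ω)`. -/
theorem main_interior_estimate (n : ℕ) (hn : 2 ≤ n)
    (Γ : Set (Fin n → ℝ)) (f : (Fin n → ℝ) → ℝ)
    (hΓ : IsConvexInvariantCone Γ) (hf : IsConcaveEllipticHessianOp Γ f)
    (N₁ N₂ : ℝ) (hN₁ : 0 < N₁) (hN₂ : 0 < N₂) (hN : ConditionN Γ f N₁ N₂)
    (D₁ D₂ : ℝ) (hD₁ : 0 < D₁) (hD₂ : 0 < D₂)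
    (d : ℝ) (hd : 0 < d) :
    ∃ α β C : ℝ, 0 < α ∧ 0 < β ∧ 0 < C ∧
      ∀ (Ω : Set (EuclideanSpace ℝ (Fin n))) (u : EuclideanSpace ℝ (Fin n) → ℝ),
        IsOpen Ω → IsConnected Ω → Bornology.IsBounded Ω → Metric.diam Ω ≤ d →
        ContDiffOn ℝ (⊤ : ℕ∞) u Ω → ContinuousOn u (closure Ω) →
        (∀ x ∈ Ω, hessEigen u x ∈ Γ) →
        (∀ x ∈ Ω, f (hessEigen u x) = 1) →
        (∀ x ∈ frontier Ω, u x = 0) →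
        ConditionD f u Ω D₁ D₂ →
        ∀ x ∈ Ω,
          (-u x) + (-u x) ^ α * ‖gradient u x‖ + (-u x) ^ β * ‖iteratedFDeriv ℝ 2 u x‖ ≤ C := by
  by_cases h1 : (fun _ => (1:ℝ)) ∈ Γ
  · have hc0 : 0 < f (fun _ => 1) := hf.2.2.2.2.1 _ h1
    set c0 := f (fun _ => 1) with hc0def
    set Cs : ℝ := n * (n * D₂ / c0 + D₁) with hCs
    have hCs0 : 0 ≤ Cs := by positivity
    have hM : 0 < D₂ * N₁ := by positivity
    have hG0 : 0 ≤ GradC n c0 D₁ D₂ (D₂ * N₁) N₂ d := by unfold GradC; positivity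
    have hH0 : 0 ≤ HessC c0 D₁ D₂ (D₂ * N₁) N₂ Cs (GradC n c0 D₁ D₂ (D₂ * N₁) N₂ d) d := by
      unfold HessC; positivity
    refine ⟨N₂ + 1, 10 + N₂ + 2 * (N₂ + 1), d ^ 2 / c0 + GradC n c0 D₁ D₂ (D₂ * N₁) N₂ d +
      (HessC c0 D₁ D₂ (D₂ * N₁) N₂ Cs (GradC n c0 D₁ D₂ (D₂ * N₁) N₂ d) d
        + (d ^ 2 / c0 + 1) ^ (10 + N₂ + 2 * (N₂ + 1)) * Cs), by linarith, by linarith,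
        by positivity, ?_⟩
    intro Ω u hΩ _ hb hdiam hu huc ha hs h0 hD x hx
    exact final_est (by omega) hc0 hd hN₂ hD₁ hD₂ hM hCs0 hΩ hb hdiam hu huc h0
      (fun x hx => good_exists hn hΓ hf hN₁ hN hD₁ hD₂ hc0 hΩ hu ha hs hD hx) hx
  · refine ⟨1, 1, 1, one_pos, one_pos, one_pos, ?_⟩
    intro Ω u _ _ _ _ _ _ ha _ _ _ x hx
    exact absurd (one_mem hΓ (ha x hx)) h1
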